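/- Let M be a finitely generated ℤ-graded R-module of Krull dimension d and let P_1, …, P_t be the minimal prime ideals of dimension d in the support of M. Then for every complex number y, F(M,R,I,d)(y) = Σ_{j=1}^{t} λ_{R_{P_j}}(M_{P_j}) · F(R/P_j, R/P_j, I·(R/P_j), d)(y), where λ_{R_{P_j}}(M_{P_j}) is the length of the localization M_{P_j} over the local ring R_{P_j}. -/

import Mathlib

open Filter Complex

set_option maxHeartbeats 1000000

noncomputable section

/-- The Frobenius bracket power `I^{[q]}` of an ideal. -/
def bracketPow {R : Type*} [CommSemiring R] (I : Ideal R) (q : ℕ) : Ideal R :=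
  Ideal.span ((fun x : R => x ^ q) '' (I : Set R))

/-- `λ_k((M/N)_j)`. -/
def quotPieceDim (k : Type*) {R M : Type*} [Field k] [CommRing R] [Algebra k R]
    [AddCommGroup M] [Module R M] [Module k M] [IsScalarTower k R M]
    (ℳ : ℤ → Submodule k M) (N : Submodule R M) (j : ℤ) : ℕ :=
  Module.finrank k ((ℳ j).map (N.mkQ.restrictScalars k))

/-- `F_n(M,R,I,d)(y)`. -/
def FnGen (k : Type*) {R M : Type*} [Field k] [CommRing R] [Algebra k R]
    [AddCommGroup M] [Module R M] [Module k M] [IsScalarTower k R M]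
    (ℳ : ℤ → Submodule k M) (I : Ideal R) (p d n : ℕ) (y : ℂ) : ℂ :=
  (1 / (p : ℂ) ^ n) ^ d *
    ∑' j : ℤ, (quotPieceDim k (R := R) ℳ (bracketPow I (p ^ n) • ⊤) j : ℂ) *
      Complex.exp (-Complex.I * y * (j : ℂ) / (p : ℂ) ^ n)

/-- The length of a module, as the Krull dimension of its lattice of submodules. -/
def moduleLength (R M : Type*) [CommRing R] [AddCommGroup M] [Module R M] : WithBot ℕ∞ :=
  Order.krullDim (Submodule R M)

/-! Write `q = p ^ n` and call a quantity negligible if it is `O(q ^ (d - 1))`. The weighted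
colength sums are additive on short exact sequences up to negligible errors as soon as `M` is
killed by a radical ideal of dimension at most `d`. To reach that situation, replace `R` by its
subalgebra `B_e = k[R^{p^e}]` with `e ≫ 0`: Frobenius preserves the `k`-linear independence of
elements of its image in `R / Ann M`, which is therefore reduced.

For a prime `P`, Frobenius also identifies the sum of `B_e / (P ∩ B_e)` at level `m` with the sum
of `B_{e+1} / (P ∩ B_{e+1})` at level `m + 1`. If `r` is the rank of the first ring over the second,
the sums `a m` of `B_e / (P ∩ B_e)` satisfy `a (m + 1) = r * a m + O(p ^ (m * (d - 1)))`. Since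
`a m = O(p ^ (m * d))`, the quotients `a m / p ^ (m * d)` converge, whatever `r` is, and those of
`R / P` converge by comparing ranks over `B_e`.

A homogeneous prime filtration of `M` then reduces the formula to the modules `R / P`: a shift by
degree `t` contributes the weight `exp (-i y t / q)`, which tends to `1`, factors of dimension
less than `d` are negligible, and the number of factors `R / P` is the length of `M_P`. -/

namespace FrobeniusPoincare

/-! ### Relative length -/

section RelLength

variable {k M M' : Type*} [Ring k] [AddCommGroup M] [Module k M] [AddCommGroup M'] [Module k M']

/-- The length of `X / (X ⊓ W)`, realized as the image of `X` in `M / W`. -/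
def relLength (W X : Submodule k M) : ℕ∞ := Module.length k (X.map W.mkQ)

lemma length_range_le_of_ker_le {N N' : Type*} [AddCommGroup N] [Module k N] [AddCommGroup N']
    [Module k N'] (f : M →ₗ[k] N) (g : M →ₗ[k] N') (h : LinearMap.ker f ≤ LinearMap.ker g) :
    Module.length k (LinearMap.range g) ≤ Module.length k (LinearMap.range f) := by
  rw [← f.quotKerEquivRange.length_eq, ← g.quotKerEquivRange.length_eq]
  exact Module.length_le_of_surjective (Submodule.factor h) (Submodule.factor_surjective h)

lemma relLength_eq_length_range (W X : Submodule k M) :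
    relLength W X = Module.length k (LinearMap.range (W.mkQ ∘ₗ X.subtype)) := by
  rw [relLength, LinearMap.range_comp, Submodule.range_subtype]

lemma relLength_map_le (f : M →ₗ[k] M') {W X : Submodule k M} {W' : Submodule k M'}
    (h : ∀ x ∈ X, x ∈ W → f x ∈ W') : relLength W' (X.map f) ≤ relLength W X := by
  have hrange : (X.map f).map W'.mkQ = LinearMap.range (W'.mkQ ∘ₗ f ∘ₗ X.subtype) := by
    rw [LinearMap.range_comp, LinearMap.range_comp, Submodule.range_subtype]
  rw [relLength, hrange, relLength_eq_length_range]
  refine length_range_le_of_ker_le _ _ fun x hx => ?_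
  simp only [LinearMap.mem_ker, LinearMap.comp_apply, Submodule.subtype_apply,
    Submodule.mkQ_apply, Submodule.Quotient.mk_eq_zero] at hx ⊢
  exact h _ x.2 hx

lemma le_relLength_map (f : M →ₗ[k] M') {W X : Submodule k M} {W' : Submodule k M'}
    (h : ∀ x ∈ X, f x ∈ W' → x ∈ W) : relLength W X ≤ relLength W' (X.map f) := by
  have hrange : (X.map f).map W'.mkQ = LinearMap.range (W'.mkQ ∘ₗ f ∘ₗ X.subtype) := by
    rw [LinearMap.range_comp, LinearMap.range_comp, Submodule.range_subtype]
  rw [relLength.eq_def W', hrange, relLength_eq_length_range]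
  refine length_range_le_of_ker_le _ _ fun x hx => ?_
  simp only [LinearMap.mem_ker, LinearMap.comp_apply, Submodule.subtype_apply,
    Submodule.mkQ_apply, Submodule.Quotient.mk_eq_zero] at hx ⊢
  exact h _ x.2 hx

lemma relLength_map_eq (f : M →ₗ[k] M') {W X : Submodule k M} {W' : Submodule k M'}
    (h : ∀ x ∈ X, x ∈ W ↔ f x ∈ W') : relLength W' (X.map f) = relLength W X :=
  (relLength_map_le f fun x hx => (h x hx).1).antisymm (le_relLength_map f fun x hx => (h x hx).2)

lemma relLength_map_map (f : M →ₗ[k] M') (W X : Submodule k M) :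
    relLength (W.map f) (X.map f) = relLength (LinearMap.ker f ⊔ W) X :=
  relLength_map_eq f fun x _ => by rw [sup_comm, ← Submodule.comap_map_eq, Submodule.mem_comap]

lemma relLength_congr {W W' X : Submodule k M} (h : ∀ x ∈ X, x ∈ W ↔ x ∈ W') :
    relLength W X = relLength W' X := by
  simpa using (relLength_map_eq LinearMap.id h).symm

lemma relLength_mono_of_le_sup {W X W' X' : Submodule k M} (hW : W ≤ W') (hX : X' ≤ X ⊔ W') :
    relLength W' X' ≤ relLength W X := by
  have hmap : X'.map W'.mkQ ≤ X.map W'.mkQ := by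
    simpa [Submodule.map_sup] using Submodule.map_mono (f := W'.mkQ) hX
  calc relLength W' X' ≤ relLength W' X :=
        Module.length_le_of_injective (Submodule.inclusion hmap)
          (Submodule.inclusion_injective hmap)
    _ ≤ relLength W X := by
        simpa using relLength_map_le LinearMap.id (X := X) fun _ _ h => hW h

lemma relLength_mono_right (W : Submodule k M) {X X' : Submodule k M} (hX : X' ≤ X) :
    relLength W X' ≤ relLength W X :=
  relLength_mono_of_le_sup le_rfl (le_sup_of_le_left hX)

lemma relLength_anti_left {W W' : Submodule k M} (hW : W ≤ W') (X : Submodule k M) :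
    relLength W' X ≤ relLength W X :=
  relLength_mono_of_le_sup hW le_sup_left

lemma relLength_ne_top_of_le {W X X' : Submodule k M} (hX : X' ≤ X) (hf : relLength W X ≠ ⊤) :
    relLength W X' ≠ ⊤ :=
  ne_top_of_le_ne_top hf (relLength_mono_right W hX)

lemma relLength_eq_zero_iff {W X : Submodule k M} : relLength W X = 0 ↔ X ≤ W := by
  rw [relLength, Module.length_eq_zero_iff, Submodule.subsingleton_iff_eq_bot, ← le_bot_iff,
    Submodule.map_le_iff_le_comap]
  simp

lemma relLength_eq_inf_add {W V : Submodule k M} (h : W ≤ V) (X : Submodule k M) :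
    relLength W X = relLength W (X ⊓ V) + relLength V X := by
  have hle : (X ⊓ V).map W.mkQ ≤ X.map W.mkQ := Submodule.map_mono inf_le_left
  have hmaps : ∀ z ∈ X.map W.mkQ, Submodule.factor h z ∈ X.map V.mkQ := by
    rintro _ ⟨x, hx, rfl⟩
    exact ⟨x, hx, rfl⟩
  refine Module.length_eq_add_of_exact (Submodule.inclusion hle)
    ((Submodule.factor h).restrict hmaps) (Submodule.inclusion_injective hle) ?_ ?_
  · rintro ⟨_, ⟨x, hx, rfl⟩⟩
    exact ⟨⟨W.mkQ x, ⟨x, hx, rfl⟩⟩, rfl⟩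
  · rintro ⟨_, ⟨x, hx, rfl⟩⟩
    constructor
    · intro hz
      have hxV : x ∈ V := by simpa using congrArg Subtype.val hz
      exact ⟨⟨W.mkQ x, ⟨x, ⟨hx, hxV⟩, rfl⟩⟩, rfl⟩
    · rintro ⟨⟨_, ⟨z, hz, rfl⟩⟩, he⟩
      have hzx : z - x ∈ W := (Submodule.Quotient.eq W).1 (congrArg Subtype.val he)
      have hxV : x ∈ V := by simpa using V.sub_mem hz.2 (h hzx)
      exact Subtype.ext ((Submodule.Quotient.mk_eq_zero V).2 hxV)

lemma relLength_sup_self (W X : Submodule k M) : relLength W (X ⊔ W) = relLength W X :=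
  le_antisymm (relLength_mono_of_le_sup le_rfl le_rfl) (relLength_mono_right W le_sup_left)

lemma relLength_sup_le (W X Y : Submodule k M) :
    relLength W (X ⊔ Y) ≤ relLength W X + relLength W Y := by
  rw [relLength_eq_inf_add (le_sup_left : W ≤ W ⊔ X) (X ⊔ Y)]
  gcongr
  · exact relLength_mono_of_le_sup le_rfl (inf_le_right.trans (by rw [sup_comm]))
  · exact relLength_mono_of_le_sup le_sup_left
      (sup_le (le_sup_right.trans le_sup_right) le_sup_left)

lemma relLength_iSup_le_sum {ι : Type*} (s : Finset ι) (W : Submodule k M)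
    (X : ι → Submodule k M) : relLength W (⨆ i ∈ s, X i) ≤ ∑ i ∈ s, relLength W (X i) := by
  classical
  induction s using Finset.induction_on with
  | empty => simp [relLength_eq_zero_iff]
  | insert a s ha ih =>
    rw [Finset.iSup_insert, Finset.sum_insert ha]
    exact (relLength_sup_le _ _ _).trans (by gcongr)

/-- The endomorphism of `N / (N ⊓ W)` induced by `f` has kernel and cokernel of equal length. -/
lemma relLength_inf_comap (f : M →ₗ[k] M) {W N : Submodule k M} (hW : W ≤ W.comap f)
    (hN : N ≤ N.comap f) (hfin : relLength W N ≠ ⊤) :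
    relLength W (N ⊓ W.comap f) = relLength (W ⊔ N.map f) N := by
  have hmap : N.map f ≤ N := Submodule.map_le_iff_le_comap.2 hN
  have himage : relLength W (N ⊓ (W ⊔ N.map f)) = relLength W (N.map f) := by
    refine le_antisymm (relLength_mono_of_le_sup le_rfl ?_)
      (relLength_mono_right W (le_inf hmap le_sup_right))
    rw [sup_comm]
    exact inf_le_right
  have hker := relLength_eq_inf_add hW N
  have hcoker := relLength_eq_inf_add (le_sup_left : W ≤ W ⊔ N.map f) N
  rw [himage, relLength_map_eq f (W := W.comap f) fun _ _ => Iff.rfl, add_comm] at hcoker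
  exact WithTop.add_right_cancel (ne_top_of_le_ne_top hfin (relLength_anti_left hW N))
    (hker.symm.trans hcoker)

end RelLength

/-! ### Homogeneous subspaces and weighted Hilbert sums -/

section Graded

variable {k S M : Type*} [Ring k] [Semiring S] [AddCommGroup M] [Module k M] [Module S M]
  {ℳ : ℤ → Submodule k M}

variable (ℳ) in
/-- The Hilbert series of `X / (X ⊓ W)` with the monomial `t ^ j` replaced by the weight `w j`. -/
def weightedSum (w : ℤ → ℂ) (W X : Submodule k M) : ℂ :=
  ∑' j, ((relLength W (X ⊓ ℳ j)).toNat : ℂ) * w j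

lemma weightedSum_congr (w : ℤ → ℂ) {W W' X : Submodule k M} (h : ∀ x ∈ X, x ∈ W ↔ x ∈ W') :
    weightedSum ℳ w W X = weightedSum ℳ w W' X := by
  refine tsum_congr fun j => ?_
  rw [relLength_congr fun x (hx : x ∈ X ⊓ ℳ j) => h x hx.1]

variable [DirectSum.Decomposition ℳ]

lemma isHomogeneous_sup {N N' : Submodule S M} (h : N.IsHomogeneous ℳ)
    (h' : N'.IsHomogeneous ℳ) : (N ⊔ N').IsHomogeneous ℳ := by
  intro j x hx
  obtain ⟨y, hy, z, hz, rfl⟩ := Submodule.mem_sup.1 hx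
  rw [DirectSum.decompose_add]
  exact Submodule.add_mem_sup (h j hy) (h' j hz)

lemma isHomogeneous_top : (⊤ : Submodule S M).IsHomogeneous ℳ := fun _ _ _ => trivial

lemma isHomogeneous_bot : (⊥ : Submodule S M).IsHomogeneous ℳ := by
  rintro j x rfl
  simp

lemma le_of_forall_homogeneous_mem {N N' : Submodule S M} (h : N.IsHomogeneous ℳ)
    (h' : ∀ j, ∀ x ∈ N, x ∈ ℳ j → x ∈ N') : N ≤ N' := by
  classical
  intro x hx
  rw [← DirectSum.sum_support_decompose ℳ x]
  exact Submodule.sum_mem _ fun j _ => h' j _ (h j hx) (SetLike.coe_mem _)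

lemma mem_of_mem_sup_iSup {W : Submodule k M} (hW : W.IsHomogeneous ℳ) (s : Set ℤ) {j : ℤ}
    (hj : j ∉ s) {x : M} (hx : x ∈ ℳ j) (h : x ∈ W ⊔ ⨆ i ∈ s, ℳ i) : x ∈ W := by
  obtain ⟨y, hy, z, hz, hyz⟩ := Submodule.mem_sup.1 h
  have hcomp : (DirectSum.decompose ℳ z j : M) = 0 := by
    clear hyz
    induction hz using Submodule.iSup_induction' with
    | mem i z hz =>
      by_cases hi : i ∈ s
      · rw [iSup_pos hi] at hz
        exact DirectSum.decompose_of_mem_ne _ hz fun e => hj (e ▸ hi)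
      · rw [iSup_neg hi, Submodule.mem_bot] at hz
        simp [hz]
    | zero => simp
    | add z z' _ _ hz hz' => simp [hz, hz']
  have hxy : x = DirectSum.decompose ℳ y j := by
    rw [← DirectSum.decompose_of_mem_same ℳ hx, ← hyz, DirectSum.decompose_add]
    simp [hcomp]
  exact hxy ▸ hW j hy

lemma sup_inf_piece_le {W N : Submodule k M} (hW : W.IsHomogeneous ℳ) (hN : N.IsHomogeneous ℳ)
    (j : ℤ) : (N ⊔ W) ⊓ ℳ j ≤ (N ⊓ ℳ j) ⊔ W := by
  rintro x ⟨hx, hj⟩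
  obtain ⟨y, hy, z, hz, rfl⟩ := Submodule.mem_sup.1 hx
  rw [← DirectSum.decompose_of_mem_same ℳ hj, DirectSum.decompose_add]
  exact Submodule.add_mem_sup ⟨hN j hy, SetLike.coe_mem _⟩ (hW j hz)

lemma sum_relLength_pieces_le {W : Submodule k M} (hW : W.IsHomogeneous ℳ) (X : Submodule k M)
    (s : Finset ℤ) : ∑ j ∈ s, relLength W (X ⊓ ℳ j) ≤ relLength W X := by
  classical
  suffices key : ∑ j ∈ s, relLength W (X ⊓ ℳ j) ≤ relLength W (X ⊓ ⨆ j ∈ s, ℳ j) from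
    key.trans (relLength_mono_right W inf_le_left)
  induction s using Finset.induction_on with
  | empty => simp
  | insert a s ha ih =>
    rw [Finset.sum_insert ha, Finset.iSup_insert,
      relLength_eq_inf_add (le_sup_left : W ≤ W ⊔ ⨆ j ∈ s, ℳ j) (X ⊓ (ℳ a ⊔ ⨆ j ∈ s, ℳ j)),
      add_comm]
    gcongr
    · refine ih.trans (relLength_mono_right W (le_inf ?_ ?_))
      · exact inf_le_inf_left _ le_sup_right
      · exact inf_le_right.trans le_sup_right
    · calc relLength W (X ⊓ ℳ a) = relLength (W ⊔ ⨆ j ∈ s, ℳ j) (X ⊓ ℳ a) :=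
            relLength_congr fun x hx => ⟨fun h => Submodule.mem_sup_left h,
              mem_of_mem_sup_iSup hW (s : Set ℤ) (by simpa using ha) hx.2⟩
        _ ≤ _ := relLength_mono_right _ (inf_le_inf_left _ le_sup_left)

lemma finite_setOf_relLength_piece_ne_zero {W : Submodule k M} (hW : W.IsHomogeneous ℳ)
    {X : Submodule k M} (hf : relLength W X ≠ ⊤) : {j | relLength W (X ⊓ ℳ j) ≠ 0}.Finite := by
  by_contra hinf
  obtain ⟨N, hN⟩ := ENat.ne_top_iff_exists.1 hf
  obtain ⟨s, hs, hcard⟩ := Set.Infinite.exists_subset_card_eq hinf (N + 1)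
  have hle : ((N + 1 : ℕ) : ℕ∞) ≤ N := calc
    ((N + 1 : ℕ) : ℕ∞) = ∑ _j ∈ s, (1 : ℕ∞) := by simp [hcard]
    _ ≤ ∑ j ∈ s, relLength W (X ⊓ ℳ j) :=
        Finset.sum_le_sum fun _ hj => Order.one_le_iff_ne_zero.2 (hs hj)
    _ ≤ N := hN ▸ sum_relLength_pieces_le hW X s
  norm_cast at hle
  lia

lemma summable_weightedSum (w : ℤ → ℂ) {W : Submodule k M} (hW : W.IsHomogeneous ℳ)
    {X : Submodule k M} (hf : relLength W X ≠ ⊤) :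
    Summable fun j => ((relLength W (X ⊓ ℳ j)).toNat : ℂ) * w j := by
  apply summable_of_hasFiniteSupport
  refine (finite_setOf_relLength_piece_ne_zero hW hf).subset fun j hj h0 => ?_
  simp [h0] at hj

lemma weightedSum_eq_inf_add (w : ℤ → ℂ) {W V X : Submodule k M} (hW : W.IsHomogeneous ℳ)
    (hV : V.IsHomogeneous ℳ) (hWV : W ≤ V) (hf : relLength W X ≠ ⊤) :
    weightedSum ℳ w W X = weightedSum ℳ w W (X ⊓ V) + weightedSum ℳ w V X := by
  have hinf : relLength W (X ⊓ V) ≠ ⊤ := relLength_ne_top_of_le inf_le_left hf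
  have hquot : relLength V X ≠ ⊤ := ne_top_of_le_ne_top hf (relLength_anti_left hWV X)
  rw [weightedSum, weightedSum, weightedSum,
    ← (summable_weightedSum w hW hinf).tsum_add (summable_weightedSum w hV hquot)]
  congr 1
  ext j
  rw [relLength_eq_inf_add hWV (X ⊓ ℳ j), inf_right_comm,
    ENat.toNat_add (relLength_ne_top_of_le inf_le_left hinf)
      (relLength_ne_top_of_le inf_le_left hquot)]
  push_cast
  ring

lemma norm_weightedSum_le (w : ℤ → ℂ) {W X : Submodule k M} (hW : W.IsHomogeneous ℳ)
    (hf : relLength W X ≠ ⊤) {C : ℝ} (hC : 0 ≤ C)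
    (hw : ∀ j, relLength W (X ⊓ ℳ j) ≠ 0 → ‖w j‖ ≤ C) :
    ‖weightedSum ℳ w W X‖ ≤ C * (relLength W X).toNat := by
  have hfin := finite_setOf_relLength_piece_ne_zero hW hf
  have hsum : ∑ j ∈ hfin.toFinset, ((relLength W (X ⊓ ℳ j)).toNat : ℝ)
      ≤ (relLength W X).toNat := by
    have h := ENat.toNat_le_toNat (sum_relLength_pieces_le hW X hfin.toFinset) hf
    rw [ENat.toNat_sum fun j _ => relLength_ne_top_of_le inf_le_left hf] at h
    exact_mod_cast h
  rw [weightedSum, tsum_eq_sum (s := hfin.toFinset) fun j hj => by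
    simp [show relLength W (X ⊓ ℳ j) = 0 by simpa using hj]]
  calc _ ≤ ∑ j ∈ hfin.toFinset, ‖((relLength W (X ⊓ ℳ j)).toNat : ℂ) * w j‖ := norm_sum_le _ _
    _ ≤ ∑ j ∈ hfin.toFinset, ((relLength W (X ⊓ ℳ j)).toNat : ℝ) * C := by
        refine Finset.sum_le_sum fun j hj => ?_
        rw [norm_mul, Complex.norm_natCast]
        gcongr
        exact hw j (by simpa using hj)
    _ = C * ∑ j ∈ hfin.toFinset, ((relLength W (X ⊓ ℳ j)).toNat : ℝ) := by
        rw [← Finset.sum_mul, mul_comm]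
    _ ≤ _ := by gcongr

lemma weightedSum_sup_self (w : ℤ → ℂ) {W N : Submodule k M} (hW : W.IsHomogeneous ℳ)
    (hN : N.IsHomogeneous ℳ) : weightedSum ℳ w W (N ⊔ W) = weightedSum ℳ w W N := by
  refine tsum_congr fun j => ?_
  rw [le_antisymm (relLength_mono_of_le_sup le_rfl (sup_inf_piece_le hW hN j))
    (relLength_mono_right W (inf_le_inf_right _ le_sup_left))]

end Graded

/-! ### Ideals with quotient of bounded dimension -/

section QuotDim

variable {B : Type*} [CommRing B]

/-- `B / 𝔠` has Krull dimension less than `d`. -/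
def QuotDimLT (d : ℕ) (𝔠 : Ideal B) : Prop :=
  ∀ P : PrimeSpectrum B, 𝔠 ≤ P.asIdeal → Order.coheight P < d

variable {d : ℕ} {𝔞 𝔟 Q : Ideal B}

lemma QuotDimLT.mono (h : QuotDimLT d 𝔞) (hle : 𝔞 ≤ 𝔟) : QuotDimLT d 𝔟 :=
  fun P hP => h P (hle.trans hP)

lemma QuotDimLT.of_isPrime_lt [hQ : Q.IsPrime] (h : QuotDimLT (d + 1) Q) (hlt : Q < 𝔟) :
    QuotDimLT d 𝔟 := by
  intro P hP
  have hQP : (⟨Q, hQ⟩ : PrimeSpectrum B) < P := lt_of_lt_of_le (α := Ideal B) hlt hP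
  have hcoheight : Order.coheight P + 1 < d + 1 :=
    (Order.coheight_add_one_le hQP).trans_lt (by exact_mod_cast h ⟨Q, hQ⟩ le_rfl)
  exact lt_of_add_lt_add_right hcoheight

lemma QuotDimLT.eq_top (h : QuotDimLT 0 𝔞) : 𝔞 = ⊤ := by
  by_contra hne
  obtain ⟨m, hm, hle⟩ := Ideal.exists_le_maximal 𝔞 hne
  simpa using h ⟨m, hm.isPrime⟩ hle

lemma exists_mem_quotDimLT_sup_span [IsNoetherianRing B] (h𝔞 : QuotDimLT (d + 1) 𝔞)
    (h𝔟 : QuotDimLT d 𝔟) : ∃ s ∈ 𝔟, QuotDimLT d (𝔞 ⊔ Ideal.span {s}) := by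
  classical
  have hfin := 𝔞.finite_minimalPrimes_of_isNoetherianRing
  let F := hfin.toFinset.filter fun P => ¬ 𝔟 ≤ P
  have havoid : ¬ ((𝔟 : Set B) ⊆ ⋃ P ∈ (F : Set (Ideal B)), P) := by
    rw [Ideal.subset_union_prime (f := fun P => P) ⊥ ⊥ fun P hP _ _ => by
      simp only [F, Finset.mem_filter, hfin.mem_toFinset] at hP
      exact hP.1.1.1]
    rintro ⟨P, hP, hle⟩
    exact (Finset.mem_filter.1 hP).2 hle
  obtain ⟨s, hs, hsF⟩ := Set.not_subset.1 havoid
  refine ⟨s, hs, fun P hP => ?_⟩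
  have := P.2
  obtain ⟨P₀, hP₀, hle⟩ := Ideal.exists_minimalPrimes_le (le_sup_left.trans hP)
  have := hP₀.1.1
  have hsP : s ∈ P.asIdeal := hP (Submodule.mem_sup_right (Ideal.mem_span_singleton_self s))
  by_cases h𝔟P : 𝔟 ≤ P₀
  · exact h𝔟 P (h𝔟P.trans hle)
  · have hsP₀ : s ∉ P₀ := fun h => hsF <| Set.mem_biUnion
      (Finset.mem_coe.2 (Finset.mem_filter.2 ⟨hfin.mem_toFinset.2 hP₀, h𝔟P⟩)) h
    exact (h𝔞.mono hP₀.1.2).of_isPrime_lt (hle.lt_of_ne fun h => hsP₀ (h ▸ hsP)) P le_rfl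

lemma not_colon_le_of_mem_minimalPrimes [IsNoetherianRing B] (hr : 𝔞.IsRadical)
    (hQ : Q ∈ 𝔞.minimalPrimes) : ¬ 𝔞.colon (Q : Set B) ≤ Q := by
  intro hle
  obtain ⟨x, rfl⟩ := Submodule.exists_eq_colon_of_mem_minimalPrimes (N := 𝔞) (x := (1 : B))
    (by rwa [show 𝔞.colon {(1 : B)} = 𝔞 by ext; simp [Submodule.mem_colon_singleton]])
  have hx : x ∈ 𝔞.colon (𝔞.colon {x} : Set B) := Submodule.mem_colon.2 fun c hc => by
    simpa [mul_comm, Submodule.mem_colon_singleton] using hc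
  have hxx : x * x ∈ 𝔞 := by simpa [Submodule.mem_colon_singleton] using hle hx
  have hx𝔞 : x ∈ 𝔞 := hr ⟨2, by rwa [pow_two]⟩
  exact hQ.1.1.ne_top (by simpa using hx𝔞)

lemma QuotDimLT.sup_colon [IsNoetherianRing B] [Q.IsPrime] (h : QuotDimLT (d + 1) 𝔞)
    (hr : 𝔞.IsRadical) (hle : 𝔞 ≤ Q) : QuotDimLT d (Q ⊔ 𝔞.colon (Q : Set B)) := by
  by_cases hQ : Q ∈ 𝔞.minimalPrimes
  · exact (h.mono hle).of_isPrime_lt (left_lt_sup.2 (not_colon_le_of_mem_minimalPrimes hr hQ))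
  · obtain ⟨P, hP, hPQ⟩ := Ideal.exists_minimalPrimes_le hle
    have := hP.1.1
    exact ((h.mono hP.1.2).of_isPrime_lt (hPQ.lt_of_ne fun h => hQ (h ▸ hP))).mono le_sup_left

end QuotDim

/-! ### Growth of lengths modulo a system of ideals -/

section Growth

/-- The sequence `v` is `O(q ^ (d - 1))`, uniformly over all indices; multiplying by `q` avoids the
exponent `-1` at `d = 0`. -/
def HasGrowthBelow (q : ℕ → ℕ) (d : ℕ) (v : ℕ → ℕ∞) : Prop :=
  ∃ K : ℕ, ∀ n, v n * q n ≤ K * (q n : ℕ∞) ^ d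

variable {q : ℕ → ℕ} {d : ℕ} {v v' : ℕ → ℕ∞}

lemma HasGrowthBelow.mono (h : HasGrowthBelow q d v) (hv : ∀ n, v' n ≤ v n) :
    HasGrowthBelow q d v' := by
  obtain ⟨K, hK⟩ := h
  exact ⟨K, fun n => le_trans (by gcongr; exact hv n) (hK n)⟩

lemma HasGrowthBelow.add (h : HasGrowthBelow q d v) (h' : HasGrowthBelow q d v') :
    HasGrowthBelow q d fun n => v n + v' n := by
  obtain ⟨K, hK⟩ := h
  obtain ⟨K', hK'⟩ := h'
  refine ⟨K + K', fun n => ?_⟩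
  push_cast
  simpa only [add_mul] using add_le_add (hK n) (hK' n)

lemma hasGrowthBelow_zero : HasGrowthBelow q d fun _ => 0 := ⟨0, fun n => by simp⟩

lemma HasGrowthBelow.sum {ι : Type*} (s : Finset ι) {v : ι → ℕ → ℕ∞}
    (h : ∀ i ∈ s, HasGrowthBelow q d (v i)) : HasGrowthBelow q d fun n => ∑ i ∈ s, v i n := by
  classical
  induction s using Finset.induction_on with
  | empty => simpa using hasGrowthBelow_zero
  | insert a s ha ih =>
    simp only [Finset.sum_insert ha]
    exact (h a (by simp)).add (ih fun i hi => h i (by simp [hi]))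

lemma HasGrowthBelow.ne_top (h : HasGrowthBelow q d v) (hq : ∀ n, 0 < q n) (n : ℕ) :
    v n ≠ ⊤ := by
  obtain ⟨K, hK⟩ := h
  intro htop
  have hle := hK n
  rw [htop, ENat.top_mul (by exact_mod_cast (hq n).ne'), top_le_iff] at hle
  exact ENat.natCast_ne_top (K * q n ^ d) (by exact_mod_cast hle)

lemma HasGrowthBelow.isBigO_toNat (h : HasGrowthBelow q d v) (hq : ∀ n, 0 < q n) :
    (fun n => ((v n).toNat : ℝ)) =O[⊤] fun n => (q n : ℝ) ^ d / q n := by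
  have hfin := h.ne_top hq
  obtain ⟨K, hK⟩ := h
  refine Asymptotics.IsBigO.of_bound K (eventually_top.2 fun n => ?_)
  have hle := hK n
  rw [← ENat.natCast_toNat (hfin n)] at hle
  have hpos : (0 : ℝ) < q n := by exact_mod_cast hq n
  rw [Real.norm_of_nonneg (by positivity), Real.norm_of_nonneg (by positivity), ← mul_div_assoc,
    le_div_iff₀ hpos]
  exact_mod_cast hle

end Growth

section System

variable {k B M : Type*} [Field k] [CommRing B] [Algebra k B]
  [AddCommGroup M] [Module B M] [Module k M] [IsScalarTower k B M]
  {𝒜 : ℤ → Submodule k B} [GradedAlgebra 𝒜]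

local notation "ρ" => Submodule.restrictScalars k

variable (𝒜) in
/-- Homogeneous ideals `ideal n` growing with a scale `scale n` like the Frobenius powers of an
ideal of finite colength: the `(exponent * scale n)`-th powers of finitely many homogeneous
generators of positive degree of the algebra `B` lie in `ideal n`. -/
structure GradedIdealSystem where
  /-- The scale, which is `p ^ n` for Frobenius powers. -/
  scale : ℕ → ℕ
  scale_pos : ∀ n, 0 < scale n
  ideal : ℕ → Ideal B
  isHomogeneous_ideal : ∀ n, (ideal n).IsHomogeneous 𝒜
  gens : Finset B
  degree : B → ℕ
  mem_degree : ∀ f ∈ gens, f ∈ 𝒜 (degree f)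
  adjoin_gens : Algebra.adjoin k (gens : Set B) = ⊤
  exponent : ℕ
  pow_mem : ∀ f ∈ gens, ∀ n, f ^ (exponent * scale n) ∈ ideal n

lemma GradedIdealSystem.isNoetherianRing (S : GradedIdealSystem 𝒜) : IsNoetherianRing B := by
  have : Algebra.FiniteType k B := ⟨⟨S.gens, S.adjoin_gens⟩⟩
  exact Algebra.FiniteType.isNoetherianRing k B

lemma relLength_le_of_le_span_singleton_sup {𝔠 : Ideal B} {W : Submodule B M}
    {X : Submodule k M} (z : M) (h : ∀ b ∈ 𝔠, b • z ∈ W) (hX : X ≤ ρ (B ∙ z ⊔ W)) :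
    relLength (ρ W) X ≤ relLength (ρ 𝔠) ⊤ := by
  refine (relLength_mono_of_le_sup (X := (⊤ : Submodule k B).map
    ((LinearMap.toSpanSingleton B M z).restrictScalars k)) le_rfl ?_).trans
    (relLength_map_le _ fun b _ hb => h b hb)
  rw [Submodule.restrictScalars_sup] at hX
  refine hX.trans (sup_le_sup_right (fun x hx => ?_) _)
  obtain ⟨b, rfl⟩ := Submodule.mem_span_singleton.1 hx
  exact ⟨b, trivial, rfl⟩

lemma relLength_sup_span_pow_le (𝔟 : Ideal B) (x : B) (l : ℕ) :
    relLength (ρ (𝔟 ⊔ Ideal.span {x ^ l})) (⊤ : Submodule k B)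
      ≤ l * relLength (ρ (𝔟 ⊔ Ideal.span {x})) ⊤ := by
  induction l with
  | zero => simp [relLength_eq_zero_iff]
  | succ l ih =>
    have hle : ρ (𝔟 ⊔ Ideal.span {x ^ (l + 1)}) ≤ ρ (𝔟 ⊔ Ideal.span {x ^ l}) :=
      (sup_le_sup_left (Ideal.span_singleton_le_span_singleton.2 (pow_dvd_pow x l.le_succ)) 𝔟 :
        𝔟 ⊔ Ideal.span {x ^ (l + 1)} ≤ 𝔟 ⊔ Ideal.span {x ^ l})
    have hcyc : relLength (ρ (𝔟 ⊔ Ideal.span {x ^ (l + 1)})) (⊤ ⊓ ρ (𝔟 ⊔ Ideal.span {x ^ l}))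
        ≤ relLength (ρ (𝔟 ⊔ Ideal.span {x})) ⊤ := by
      refine relLength_le_of_le_span_singleton_sup (x ^ l) (fun b hb => ?_) fun z hz => ?_
      · obtain ⟨y, hy, z, hz, rfl⟩ := Submodule.mem_sup.1 hb
        obtain ⟨c, rfl⟩ := Ideal.mem_span_singleton'.1 hz
        rw [add_smul]
        refine Submodule.add_mem_sup (Ideal.mul_mem_right _ _ hy)
          (Ideal.mem_span_singleton'.2 ⟨c, ?_⟩)
        rw [smul_eq_mul]
        ring
      · exact (sup_le (le_sup_left.trans le_sup_right) le_sup_left :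
          𝔟 ⊔ Ideal.span {x ^ l} ≤ Ideal.span {x ^ l} ⊔ (𝔟 ⊔ Ideal.span {x ^ (l + 1)})) hz.2
    calc _ = _ := relLength_eq_inf_add hle ⊤
      _ ≤ relLength (ρ (𝔟 ⊔ Ideal.span {x})) ⊤ + l * relLength (ρ (𝔟 ⊔ Ideal.span {x})) ⊤ :=
          add_le_add hcyc ih
      _ = _ := by push_cast; ring

lemma GradedIdealSystem.relLength_top_le_one (S : GradedIdealSystem 𝒜) {𝔟 : Ideal B}
    (h : ∀ f ∈ S.gens, f ∈ 𝔟) : relLength (ρ 𝔟) (⊤ : Submodule k B) ≤ 1 := by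
  have htop : (⊤ : Submodule k B) ≤ (⊤ : Submodule k k).map (Algebra.linearMap k B) ⊔ ρ 𝔟 := by
    intro x _
    have hx : x ∈ Algebra.adjoin k (S.gens : Set B) := by rw [S.adjoin_gens]; trivial
    induction hx using Algebra.adjoin_induction with
    | mem x hx => exact Submodule.mem_sup_right (h x hx)
    | algebraMap r => exact Submodule.mem_sup_left ⟨r, trivial, rfl⟩
    | add x y _ _ hx hy => exact Submodule.add_mem _ (hx trivial) (hy trivial)
    | mul x y _ _ hx hy =>
      obtain ⟨_, ⟨c, -, rfl⟩, u, hu : u ∈ 𝔟, rfl⟩ := Submodule.mem_sup.1 (hx trivial)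
      obtain ⟨_, ⟨c', -, rfl⟩, v, hv : v ∈ 𝔟, rfl⟩ := Submodule.mem_sup.1 (hy trivial)
      have hsplit : (Algebra.linearMap k B c + u) * (Algebra.linearMap k B c' + v) =
          Algebra.linearMap k B (c * c')
            + (u * (Algebra.linearMap k B c' + v) + Algebra.linearMap k B c * v) := by
        simp only [Algebra.linearMap_apply, map_mul]
        ring
      rw [hsplit]
      exact Submodule.add_mem_sup ⟨_, trivial, rfl⟩
        (𝔟.add_mem (𝔟.mul_mem_right _ hu) (𝔟.mul_mem_left _ hv))
  have hfield : relLength (⊥ : Submodule k k) ⊤ ≤ 1 := by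
    rw [relLength_eq_length_range, ← Module.length_eq_one k k]
    exact Module.length_le_of_surjective ((⊥ : Submodule k k).mkQ.comp
      (⊤ : Submodule k k).subtype |>.rangeRestrict.comp (LinearMap.id.codRestrict ⊤ (by simp)))
      ((LinearMap.surjective_rangeRestrict _).comp fun x => ⟨x, rfl⟩)
  refine ((relLength_mono_of_le_sup le_rfl htop).trans (relLength_map_le _ fun x _ hx => ?_)).trans
    hfield
  simp [(Submodule.mem_bot k).1 hx]

variable (S : GradedIdealSystem 𝒜) {d : ℕ} {𝔟 : Ideal B}

/-- The length of `B / (𝔟 + S.ideal n)` over `k`. -/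
def GradedIdealSystem.quotLength (𝔟 : Ideal B) (n : ℕ) : ℕ∞ :=
  relLength (ρ (𝔟 ⊔ S.ideal n)) (⊤ : Submodule k B)

lemma GradedIdealSystem.hasGrowthBelow_of_sup_span_gen {f : B} (hf : f ∈ S.gens)
    (h : HasGrowthBelow S.scale d (S.quotLength (𝔟 ⊔ Ideal.span {f ^ S.exponent}))) :
    HasGrowthBelow S.scale (d + 1) (S.quotLength 𝔟) := by
  obtain ⟨K, hK⟩ := h
  refine ⟨K, fun n => ?_⟩
  have hle : S.quotLength 𝔟 n
      ≤ S.scale n * S.quotLength (𝔟 ⊔ Ideal.span {f ^ S.exponent}) n := by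
    have hmem : f ^ (S.exponent * S.scale n) ∈ 𝔟 ⊔ S.ideal n :=
      Submodule.mem_sup_right (S.pow_mem f hf n)
    have hpow := relLength_sup_span_pow_le (k := k) (𝔟 ⊔ S.ideal n) (f ^ S.exponent) (S.scale n)
    rwa [← pow_mul, sup_eq_left.2 ((Ideal.span_singleton_le_iff_mem _).2 hmem),
      sup_right_comm] at hpow
  calc S.quotLength 𝔟 n * S.scale n
      ≤ S.scale n * S.quotLength (𝔟 ⊔ Ideal.span {f ^ S.exponent}) n * S.scale n := by gcongr
    _ = S.scale n * (S.quotLength (𝔟 ⊔ Ideal.span {f ^ S.exponent}) n * S.scale n) := by ring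
    _ ≤ S.scale n * (K * (S.scale n : ℕ∞) ^ d) := mul_le_mul_right (hK n) _
    _ = K * (S.scale n : ℕ∞) ^ (d + 1) := by ring

lemma GradedIdealSystem.hasGrowthBelow_of_mul_mem {x y : B} (hxy : x * y ∈ 𝔟)
    (hx : HasGrowthBelow S.scale d (S.quotLength (𝔟 ⊔ Ideal.span {x})))
    (hy : HasGrowthBelow S.scale d (S.quotLength (𝔟 ⊔ Ideal.span {y}))) :
    HasGrowthBelow S.scale d (S.quotLength 𝔟) := by
  refine (hy.add hx).mono fun n => ?_
  have hle : ρ (𝔟 ⊔ S.ideal n) ≤ ρ (𝔟 ⊔ Ideal.span {x} ⊔ S.ideal n) :=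
    (sup_le_sup_right le_sup_left _ : 𝔟 ⊔ S.ideal n ≤ 𝔟 ⊔ Ideal.span {x} ⊔ S.ideal n)
  have hcolon : 𝔟 ⊔ Ideal.span {y} ⊔ S.ideal n ≤ (𝔟 ⊔ S.ideal n).colon {x} := by
    refine sup_le (sup_le (le_sup_left.trans Ideal.le_colon) ?_) (le_sup_right.trans Ideal.le_colon)
    rw [Ideal.span_singleton_le_iff_mem, Submodule.mem_colon_singleton, smul_eq_mul, mul_comm]
    exact Submodule.mem_sup_left hxy
  rw [quotLength, relLength_eq_inf_add hle]
  refine add_le_add (relLength_le_of_le_span_singleton_sup x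
    (fun b hb => Submodule.mem_colon_singleton.1 (hcolon hb)) fun z hz => ?_) le_rfl
  exact (sup_le (sup_le (le_sup_left.trans le_sup_right) le_sup_left)
    (le_sup_right.trans le_sup_right) :
      𝔟 ⊔ Ideal.span {x} ⊔ S.ideal n ≤ Ideal.span {x} ⊔ (𝔟 ⊔ S.ideal n)) hz.2

lemma GradedIdealSystem.hasGrowthBelow_of_forall_gt [h𝔟 : 𝔟.IsPrime]
    (h : ∀ 𝔠, 𝔟 < 𝔠 → HasGrowthBelow S.scale d (S.quotLength 𝔠)) :
    HasGrowthBelow S.scale (d + 1) (S.quotLength 𝔟) := by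
  by_cases hall : ∀ f ∈ S.gens, f ∈ 𝔟
  · refine ⟨1, fun n => ?_⟩
    have hone : S.quotLength 𝔟 n ≤ 1 :=
      S.relLength_top_le_one fun f hf => Submodule.mem_sup_left (hall f hf)
    calc S.quotLength 𝔟 n * S.scale n ≤ 1 * (S.scale n : ℕ∞) := by gcongr
      _ ≤ (1 : ℕ) * (S.scale n : ℕ∞) ^ (d + 1) := by
          norm_cast
          gcongr
          exact Nat.le_self_pow d.succ_ne_zero _
  · push Not at hall
    obtain ⟨f, hf, hf𝔟⟩ := hall
    refine S.hasGrowthBelow_of_sup_span_gen hf (h _ (left_lt_sup.2 ?_))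
    rw [Ideal.span_singleton_le_iff_mem]
    exact fun hpow => hf𝔟 (h𝔟.mem_of_pow_mem _ hpow)

lemma GradedIdealSystem.hasGrowthBelow_top : HasGrowthBelow S.scale d (S.quotLength ⊤) :=
  hasGrowthBelow_zero.mono fun n => by simp [quotLength, relLength_eq_zero_iff]

theorem GradedIdealSystem.hasGrowthBelow (d : ℕ) :
    ∀ 𝔟 : Ideal B, QuotDimLT d 𝔟 → HasGrowthBelow S.scale d (S.quotLength 𝔟) := by
  have := S.isNoetherianRing
  induction d with
  | zero => exact fun 𝔟 h𝔟 => h𝔟.eq_top ▸ S.hasGrowthBelow_top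
  | succ d ih =>
    intro 𝔟
    induction 𝔟 using IsNoetherian.induction with
    | hgt 𝔟 ih𝔟 =>
    intro h𝔟
    by_cases hprime : Ideal.IsPrime 𝔟
    · exact S.hasGrowthBelow_of_forall_gt fun 𝔠 h𝔠 => ih 𝔠 (h𝔟.of_isPrime_lt h𝔠)
    · obtain rfl | ⟨x, hx, y, hy, hxy⟩ := Ideal.not_isPrime_iff.1 hprime
      · exact S.hasGrowthBelow_top
      · have hlt : ∀ z ∉ 𝔟, 𝔟 < 𝔟 ⊔ Ideal.span {z} := fun z hz =>
          left_lt_sup.2 (by rwa [Ideal.span_singleton_le_iff_mem])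
        exact S.hasGrowthBelow_of_mul_mem hxy (ih𝔟 _ (hlt x hx) (h𝔟.mono le_sup_left))
          (ih𝔟 _ (hlt y hy) (h𝔟.mono le_sup_left))

lemma GradedIdealSystem.hasGrowthBelow_relLength (h𝔟 : QuotDimLT d 𝔟) {U X : Submodule B M}
    (hX : X.FG) (hU : ∀ b ∈ 𝔟, ∀ x ∈ X, b • x ∈ U) :
    HasGrowthBelow S.scale d fun n => relLength (ρ (U ⊔ S.ideal n • X)) (ρ X) := by
  obtain ⟨s, hs⟩ := hX
  have hsX : ∀ m ∈ s, m ∈ X := fun m hm => hs ▸ Submodule.subset_span hm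
  have hXs : ρ X = ⨆ m ∈ s, ρ (B ∙ m) := by
    rw [← hs, Submodule.span_eq_iSup_of_singleton_spans]
    simp
  refine (HasGrowthBelow.sum s fun _ _ => S.hasGrowthBelow d 𝔟 h𝔟).mono fun n => ?_
  rw [hXs]
  refine (relLength_iSup_le_sum s _ _).trans (Finset.sum_le_sum fun m hm => ?_)
  refine relLength_le_of_le_span_singleton_sup m (fun b hb => ?_)
    (le_sup_left : B ∙ m ≤ B ∙ m ⊔ _)
  obtain ⟨y, hy, z, hz, rfl⟩ := Submodule.mem_sup.1 hb
  rw [add_smul]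
  exact Submodule.add_mem_sup (hU y hy m (hsX m hm)) (Submodule.smul_mem_smul hz (hsX m hm))

end System

/-! ### Graded modules over graded algebras -/

section GradedModule

variable {k B M : Type*} [Field k] [CommRing B] [Algebra k B]
  [AddCommGroup M] [Module B M] [Module k M]
  {𝒜 : ℤ → Submodule k B} [GradedAlgebra 𝒜]
  {ℳ : ℤ → Submodule k M} [DirectSum.Decomposition ℳ] [SetLike.GradedSMul 𝒜 ℳ]

variable (𝒜) in
lemma decompose_smul_add {t : ℤ} {m : M} (hm : m ∈ ℳ t) (b : B) (i : ℤ) :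
    (DirectSum.decompose ℳ (b • m) (i + t) : M) = (DirectSum.decompose 𝒜 b i : B) • m := by
  induction b using DirectSum.Decomposition.inductionOn 𝒜 with
  | zero => simp
  | @homogeneous l b =>
    have hbm : (b : B) • m ∈ ℳ (l + t) := SetLike.GradedSMul.smul_mem b.2 hm
    by_cases h : l = i
    · subst h
      rw [DirectSum.decompose_of_mem_same _ hbm, DirectSum.decompose_of_mem_same _ b.2]
    · rw [DirectSum.decompose_of_mem_ne _ hbm (by lia), DirectSum.decompose_of_mem_ne _ b.2 h,
        zero_smul]
  | add a b ha hb =>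
    rw [add_smul, DirectSum.decompose_add, DirectSum.decompose_add]
    simp only [DirectSum.add_apply, Submodule.coe_add, ha, hb, add_smul]

open Classical in
variable (𝒜) in
lemma decompose_smul (b : B) (x : M) (j : ℤ) :
    (DirectSum.decompose ℳ (b • x) j : M) = ∑ i ∈ DFinsupp.support (DirectSum.decompose ℳ x),
      (DirectSum.decompose 𝒜 b (j - i) : B) • (DirectSum.decompose ℳ x i : M) := by
  conv_lhs => rw [← DirectSum.sum_support_decompose ℳ x, Finset.smul_sum, DirectSum.decompose_sum]
  rw [DFinsupp.finsetSum_apply, AddSubmonoidClass.coe_finsetSum]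
  refine Finset.sum_congr rfl fun i _ => ?_
  rw [← decompose_smul_add 𝒜 (SetLike.coe_mem _), sub_add_cancel]

lemma isHomogeneous_colon_singleton {N : Submodule B M} (hN : N.IsHomogeneous ℳ) {t : ℤ} {m : M}
    (hm : m ∈ ℳ t) : (N.colon {m}).IsHomogeneous 𝒜 := by
  intro i b hb
  rw [Submodule.mem_colon_singleton] at hb ⊢
  exact decompose_smul_add 𝒜 hm b i ▸ hN _ hb

variable (𝒜) in
include 𝒜 in
lemma isHomogeneous_span {s : Set M} (h : ∀ x ∈ s, ∃ j, x ∈ ℳ j) :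
    (Submodule.span B s).IsHomogeneous ℳ := by
  intro j x hx
  induction hx using Submodule.span_induction generalizing j with
  | mem x hx =>
    obtain ⟨i, hi⟩ := h x hx
    by_cases hij : i = j
    · subst hij
      rw [DirectSum.decompose_of_mem_same _ hi]
      exact Submodule.subset_span hx
    · rw [DirectSum.decompose_of_mem_ne _ hi hij]
      exact Submodule.zero_mem _
  | zero => simp
  | add x y _ _ hx hy =>
    rw [DirectSum.decompose_add]
    exact Submodule.add_mem _ (hx j) (hy j)
  | smul c x _ hx =>
    rw [decompose_smul 𝒜]
    exact Submodule.sum_mem _ fun i _ => Submodule.smul_mem _ _ (hx i)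

lemma isHomogeneous_ideal_smul {J : Ideal B} (hJ : J.IsHomogeneous 𝒜) {X : Submodule B M}
    (hX : X.IsHomogeneous ℳ) : (J • X).IsHomogeneous ℳ := by
  intro j x hx
  induction hx using Submodule.smul_induction_on' with
  | smul b hb x hx =>
    rw [decompose_smul 𝒜]
    exact Submodule.sum_mem _ fun i _ => Submodule.smul_mem_smul (hJ _ hb) (hX i hx)
  | add x _ y _ hx hy =>
    rw [DirectSum.decompose_add]
    exact Submodule.add_mem _ hx hy

omit [Algebra k B] in
lemma exists_homogeneous_span_eq {X : Submodule B M} (hX : X.IsHomogeneous ℳ) (hfg : X.FG) :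
    ∃ s : Finset M, (∀ x ∈ s, ∃ j, x ∈ ℳ j) ∧ Submodule.span B (s : Set M) = X := by
  classical
  obtain ⟨s, rfl⟩ := hfg
  refine ⟨s.biUnion fun x => (DFinsupp.support (DirectSum.decompose ℳ x)).image
    fun i => (DirectSum.decompose ℳ x i : M), fun x hx => ?_,
    le_antisymm (Submodule.span_le.2 fun x hx => ?_) (Submodule.span_le.2 fun x hx => ?_)⟩
  · simp only [Finset.mem_biUnion, Finset.mem_image] at hx
    obtain ⟨y, -, i, -, rfl⟩ := hx
    exact ⟨i, SetLike.coe_mem _⟩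
  · simp only [Finset.coe_biUnion, Set.mem_iUnion, Finset.coe_image, Set.mem_image] at hx
    obtain ⟨y, hy, i, -, rfl⟩ := hx
    exact hX i (Submodule.subset_span hy)
  · rw [SetLike.mem_coe, ← DirectSum.sum_support_decompose ℳ x]
    refine Submodule.sum_mem _ fun i hi => Submodule.subset_span ?_
    simp only [Finset.coe_biUnion, Set.mem_iUnion, Finset.coe_image, Set.mem_image]
    exact ⟨x, hx, i, hi, rfl⟩

variable (𝒜) in
include 𝒜 in
lemma exists_isPrime_colon_singleton [IsNoetherianRing B] {N X : Submodule B M}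
    (hN : N.IsHomogeneous ℳ) (hX : X.IsHomogeneous ℳ) (hXN : ¬ X ≤ N) :
    ∃ m ∈ X, ∃ t, m ∈ ℳ t ∧ (N.colon {m}).IsPrime := by
  obtain ⟨m₀, hm₀⟩ : ∃ m, m ∈ X ∧ m ∉ N ∧ ∃ t, m ∈ ℳ t := by
    by_contra! hcon
    exact hXN (le_of_forall_homogeneous_mem hX fun j x hx hj =>
      by_contra fun hxN => hcon x hx hxN j hj)
  obtain ⟨_, ⟨m, ⟨hmX, hmN, t, hmt⟩, rfl⟩, hmax⟩ :=
    set_has_maximal_iff_noetherian.2 (inferInstanceAs (IsNoetherian B B))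
      {Q | ∃ m, (m ∈ X ∧ m ∉ N ∧ ∃ t, m ∈ ℳ t) ∧ Q = N.colon {m}} ⟨_, m₀, hm₀, rfl⟩
  refine ⟨m, hmX, t, hmt, (isHomogeneous_colon_singleton
    (𝒜 := 𝒜) hN hmt).isPrime_of_homogeneous_mem_or_mem (by simpa using hmN) ?_⟩
  rintro a b - ⟨l, hb⟩ hab
  by_contra! hcon
  obtain ⟨haQ, hbQ⟩ := hcon
  rw [Submodule.mem_colon_singleton] at hbQ hab
  have hle : N.colon {m} ≤ N.colon {b • m} := fun z hz => by
    rw [Submodule.mem_colon_singleton] at hz ⊢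
    exact smul_comm z b m ▸ N.smul_mem b hz
  refine hmax (N.colon {b • m}) ⟨b • m, ⟨X.smul_mem _ hmX, hbQ, l + t,
    SetLike.GradedSMul.smul_mem hb hmt⟩, rfl⟩ (hle.lt_of_ne fun heq => haQ ?_)
  rwa [heq, Submodule.mem_colon_singleton, smul_smul]

variable (𝒜) in
include 𝒜 in
theorem homogeneous_prime_filtration_induction [IsNoetherian B M] [IsNoetherianRing B]
    {N₀ X : Submodule B M} (h₀ : N₀.IsHomogeneous ℳ) (hX : X.IsHomogeneous ℳ) (hle : N₀ ≤ X)
    (motive : Submodule B M → Prop) (base : motive N₀)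
    (step : ∀ (N : Submodule B M) (m : M) (t : ℤ), N.IsHomogeneous ℳ → N₀ ≤ N → N ⊔ B ∙ m ≤ X →
      m ∈ ℳ t → (N.colon {m}).IsPrime → motive N → motive (N ⊔ B ∙ m)) : motive X := by
  obtain ⟨N, ⟨hN, h₀N, hNX, hmotive⟩, hmax⟩ :=
    set_has_maximal_iff_noetherian.2 (inferInstanceAs (IsNoetherian B M))
      {N | N.IsHomogeneous ℳ ∧ N₀ ≤ N ∧ N ≤ X ∧ motive N} ⟨N₀, h₀, le_rfl, hle, base⟩
  by_cases hXN : X ≤ N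
  · rwa [le_antisymm hXN hNX]
  obtain ⟨m, hmX, t, hmt, hprime⟩ := exists_isPrime_colon_singleton 𝒜 hN hX hXN
  have hNmX : N ⊔ B ∙ m ≤ X := sup_le hNX ((Submodule.span_singleton_le_iff_mem _ _).2 hmX)
  have hspan : (B ∙ m).IsHomogeneous ℳ := isHomogeneous_span 𝒜 (by rintro _ rfl; exact ⟨t, hmt⟩)
  refine absurd (left_lt_sup.2 fun hmN => hprime.ne_top ?_) (hmax (N ⊔ B ∙ m)
    ⟨isHomogeneous_sup hN hspan, h₀N.trans le_sup_left, hNmX,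
      step N m t hN h₀N hNmX hmt hprime hmotive⟩)
  simpa using hmN

end GradedModule

section DegreeBound

variable {k B M : Type*} [Field k] [CommRing B] [Algebra k B]
  [AddCommGroup M] [Module B M] [Module k M]
  {𝒜 : ℤ → Submodule k B} [GradedAlgebra 𝒜]
  {ℳ : ℤ → Submodule k M} [DirectSum.Decomposition ℳ] [SetLike.GradedSMul 𝒜 ℳ]

lemma GradedIdealSystem.exists_mem_ideal_of_degree_gt (S : GradedIdealSystem 𝒜) :
    ∃ c : ℕ, ∀ n j, ∀ x ∈ 𝒜 j, ¬ (0 ≤ j ∧ j ≤ c * S.scale n) → x ∈ S.ideal n := by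
  classical
  set c := S.exponent * ∑ f ∈ S.gens, S.degree f
  refine ⟨c, fun n j x hx hj => ?_⟩
  refine mem_of_mem_sup_iSup (W := (S.ideal n).restrictScalars k) (S.isHomogeneous_ideal n)
    {j | 0 ≤ j ∧ j ≤ c * S.scale n} hj hx ?_
  have hspan : x ∈ Submodule.span k (Submonoid.closure (S.gens : Set B) : Set B) := by
    rw [← Algebra.adjoin_eq_span, S.adjoin_gens]
    trivial
  refine Submodule.span_le.2 ?_ hspan
  rintro _ hz
  obtain ⟨f, -, rfl⟩ := Submonoid.mem_closure_finset.1 hz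
  by_cases h : ∃ b ∈ S.gens, S.exponent * S.scale n ≤ f b
  · obtain ⟨b, hb, hle⟩ := h
    apply Submodule.mem_sup_left
    rw [Submodule.restrictScalars_mem, ← Finset.mul_prod_erase _ _ hb]
    exact Ideal.mul_mem_right _ _ (Ideal.mem_of_dvd _ (pow_dvd_pow _ hle) (S.pow_mem b hb n))
  · push Not at h
    have hmem := SetLike.prod_pow_mem_graded 𝒜 (fun b => (S.degree b : ℤ)) id (F := S.gens) f
      fun b hb => S.mem_degree b hb
    have hdegree : ∑ b ∈ S.gens, f b * S.degree b ≤ c * S.scale n := calc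
      _ ≤ ∑ b ∈ S.gens, S.exponent * S.scale n * S.degree b :=
          Finset.sum_le_sum fun b hb => Nat.mul_le_mul_right _ (h b hb).le
      _ = _ := by rw [← Finset.mul_sum, mul_right_comm]
    refine Submodule.mem_sup_right (le_iSup₂_of_le (f := fun i _ => 𝒜 i) _ ?_ le_rfl hmem)
    refine ⟨Finset.sum_nonneg fun i _ => by positivity, ?_⟩
    simp only [nsmul_eq_mul]
    exact_mod_cast hdegree

lemma GradedIdealSystem.exists_mem_ideal_smul_of_degree_gt (S : GradedIdealSystem 𝒜)
    {X : Submodule B M} (hX : X.IsHomogeneous ℳ) (hfg : X.FG) :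
    ∃ T : ℕ, ∀ n j, ∀ x ∈ X, x ∈ ℳ j → ¬ |j| ≤ T * S.scale n → x ∈ S.ideal n • X := by
  classical
  obtain ⟨c, hc⟩ := S.exists_mem_ideal_of_degree_gt
  obtain ⟨s, hs, rfl⟩ := exists_homogeneous_span_eq hX hfg
  choose! t ht using hs
  refine ⟨c + ∑ m ∈ s, (t m).natAbs, fun n j x hx hj hT => ?_⟩
  obtain ⟨f, -, rfl⟩ := Submodule.mem_span_finset.1 hx
  rw [← DirectSum.decompose_of_mem_same _ hj, DirectSum.decompose_sum, DFinsupp.finsetSum_apply,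
    AddSubmonoidClass.coe_finsetSum]
  refine Submodule.sum_mem _ fun m hm => ?_
  rw [← sub_add_cancel j (t m), decompose_smul_add 𝒜 (ht m hm)]
  refine Submodule.smul_mem_smul (hc n (j - t m) _ (SetLike.coe_mem _) fun hdeg => hT ?_)
    (Submodule.subset_span hm)
  have htm : |t m| ≤ ((∑ m ∈ s, (t m).natAbs : ℕ) : ℤ) := by
    rw [Int.abs_eq_natAbs]
    exact_mod_cast Finset.single_le_sum (f := fun m => (t m).natAbs) (fun _ _ => Nat.zero_le _) hm
  have hscale : (1 : ℤ) ≤ S.scale n := by exact_mod_cast S.scale_pos n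
  calc |j| ≤ |j - t m| + |t m| := by simpa using abs_add_le (j - t m) (t m)
    _ ≤ c * S.scale n + |t m| * S.scale n := by
        gcongr
        · rw [abs_of_nonneg hdeg.1]
          exact hdeg.2
        · exact le_mul_of_one_le_right (abs_nonneg _) hscale
    _ ≤ _ := by
        rw [Nat.cast_add, add_mul]
        gcongr

end DegreeBound

/-! ### Weighted Hilbert sums of the quotients `X / (U + J X)` -/

section Weight

/-- The weight of degree `j` at scale `q`. -/
def weight (y : ℂ) (q : ℕ) (j : ℤ) : ℂ := Complex.exp (-Complex.I * y * (j : ℂ) / (q : ℂ))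

lemma weight_add (y : ℂ) (q : ℕ) (i j : ℤ) :
    weight y q (i + j) = weight y q i * weight y q j := by
  rw [weight, weight, weight, ← Complex.exp_add]
  congr 1
  push_cast
  ring

lemma norm_weight_le (y : ℂ) {q : ℕ} (hq : 0 < q) {j : ℤ} {T : ℕ} (h : |j| ≤ T * q) :
    ‖weight y q j‖ ≤ Real.exp (‖y‖ * T) := by
  refine (Complex.norm_exp_le_exp_norm _).trans (Real.exp_le_exp.2 ?_)
  have hq' : (0 : ℝ) < q := by exact_mod_cast hq
  have hnorm : ‖-Complex.I * y * (j : ℂ) / (q : ℂ)‖ = ‖y‖ * |(j : ℝ)| / q := by simp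
  rw [hnorm, div_le_iff₀ hq', mul_assoc]
  gcongr
  exact_mod_cast h

lemma norm_weight_sub_one_le (y : ℂ) {q : ℕ} (hq : 0 < q) (t : ℤ) :
    ‖weight y q t - 1‖ ≤ ‖y‖ * |(t : ℝ)| * Real.exp (‖y‖ * |(t : ℝ)|) / q := by
  have hbound := Complex.norm_exp_sub_sum_le_norm_mul_exp (-Complex.I * y * (t : ℂ) / (q : ℂ)) 1
  have hnorm : ‖-Complex.I * y * (t : ℂ) / (q : ℂ)‖ = ‖y‖ * |(t : ℝ)| / q := by simp
  simp only [Finset.range_one, Finset.sum_singleton, pow_zero, Nat.factorial_zero, Nat.cast_one,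
    div_one, pow_one, hnorm] at hbound
  refine hbound.trans ?_
  have hq' : (1 : ℝ) ≤ q := by exact_mod_cast hq
  rw [div_mul_eq_mul_div]
  gcongr
  exact div_le_self (by positivity) hq'

end Weight

section HilbertSum

variable {k B M : Type*} [Field k] [CommRing B] [Algebra k B]
  [AddCommGroup M] [Module B M] [Module k M] [IsScalarTower k B M]
  {𝒜 : ℤ → Submodule k B} [GradedAlgebra 𝒜] {ℳ : ℤ → Submodule k M}

local notation "ρ" => Submodule.restrictScalars k

/-- The sequence `f` is `O(q ^ (d - 1))`, uniformly over all indices. -/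
def IsNegligible (q : ℕ → ℕ) (d : ℕ) (f : ℕ → ℂ) : Prop :=
  f =O[⊤] fun n => (q n : ℝ) ^ d / (q n : ℝ)

lemma isNegligible_zero {q : ℕ → ℕ} {d : ℕ} : IsNegligible q d fun _ => 0 :=
  Asymptotics.isBigO_zero _ _

lemma IsNegligible.add {q : ℕ → ℕ} {d : ℕ} {f g : ℕ → ℂ} (hf : IsNegligible q d f)
    (hg : IsNegligible q d g) : IsNegligible q d fun n => f n + g n :=
  Asymptotics.IsBigO.add hf hg

lemma IsNegligible.sub {q : ℕ → ℕ} {d : ℕ} {f g : ℕ → ℂ} (hf : IsNegligible q d f)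
    (hg : IsNegligible q d g) : IsNegligible q d fun n => f n - g n :=
  Asymptotics.IsBigO.sub hf hg

variable (S : GradedIdealSystem 𝒜) (y : ℂ)

variable (ℳ) in
/-- The `n`-th weighted Hilbert sum of `X / (U + S.ideal n • X)`. -/
def hilbertSum (U X : Submodule B M) (n : ℕ) : ℂ :=
  weightedSum ℳ (weight y (S.scale n)) (ρ (U ⊔ S.ideal n • X)) (ρ X)

variable (ℳ) in
lemma hilbertSum_self (N : Submodule B M) (n : ℕ) : hilbertSum ℳ S y N N n = 0 := by
  have hzero : ∀ j, relLength (ρ (N ⊔ S.ideal n • N)) (ρ N ⊓ ℳ j) = 0 := fun j =>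
    relLength_eq_zero_iff.2 (inf_le_left.trans (le_sup_left : N ≤ N ⊔ S.ideal n • N))
  simp only [hilbertSum, weightedSum, hzero, ENat.toNat_zero, Nat.cast_zero, zero_mul, tsum_zero]

variable [DirectSum.Decomposition ℳ] [SetLike.GradedSMul 𝒜 ℳ] {d : ℕ} {U N X : Submodule B M}

omit [IsScalarTower k B M] in
lemma isHomogeneous_sup_ideal_smul (hU : U.IsHomogeneous ℳ) (hX : X.IsHomogeneous ℳ) (n : ℕ) :
    (U ⊔ S.ideal n • X).IsHomogeneous ℳ :=
  isHomogeneous_sup hU (isHomogeneous_ideal_smul (S.isHomogeneous_ideal n) hX)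

lemma isNegligible_weightedSum (hX : X.IsHomogeneous ℳ) (hfg : X.FG) {W Y : ℕ → Submodule k M}
    (hW : ∀ n, (W n).IsHomogeneous ℳ) (hY : ∀ n, Y n ≤ ρ X)
    (hJ : ∀ n, ρ (S.ideal n • X) ≤ W n)
    (hgrowth : HasGrowthBelow S.scale d fun n => relLength (W n) (Y n)) :
    IsNegligible S.scale d fun n => weightedSum ℳ (weight y (S.scale n)) (W n) (Y n) := by
  obtain ⟨T, hT⟩ := S.exists_mem_ideal_smul_of_degree_gt hX hfg
  refine Asymptotics.IsBigO.trans (Asymptotics.IsBigO.of_bound 1 (eventually_top.2 fun n => ?_))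
    ((hgrowth.isBigO_toNat S.scale_pos).const_mul_left (Real.exp (‖y‖ * T)))
  rw [one_mul, Real.norm_of_nonneg (by positivity)]
  refine norm_weightedSum_le _ (hW n) (hgrowth.ne_top S.scale_pos n) (Real.exp_pos _).le
    fun j hj => norm_weight_le y (S.scale_pos n) ?_
  by_contra hdeg
  exact hj (relLength_eq_zero_iff.2 fun x hx => hJ n (hT n j x (hY n hx.1) hx.2 hdeg))

lemma isNegligible_hilbertSum (hU : U.IsHomogeneous ℳ) (hX : X.IsHomogeneous ℳ) (hfg : X.FG)
    {𝔟 : Ideal B} (h𝔟 : QuotDimLT d 𝔟) (h : ∀ b ∈ 𝔟, ∀ x ∈ X, b • x ∈ U) :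
    IsNegligible S.scale d (hilbertSum ℳ S y U X) :=
  isNegligible_weightedSum S y hX hfg (isHomogeneous_sup_ideal_smul S hU hX) (fun _ => le_rfl)
    (fun n => (le_sup_right : S.ideal n • X ≤ U ⊔ S.ideal n • X))
    (S.hasGrowthBelow_relLength h𝔟 hfg h)

lemma hilbertSum_add_hilbertSum (hU : U.IsHomogeneous ℳ) (hN : N.IsHomogeneous ℳ)
    (hX : X.IsHomogeneous ℳ) (hUN : U ≤ N) (hNX : N ≤ X) (n : ℕ)
    (hfin : relLength (ρ (U ⊔ S.ideal n • X)) (ρ X) ≠ ⊤)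
    (hfinN : relLength (ρ (U ⊔ S.ideal n • N)) (ρ N) ≠ ⊤) :
    hilbertSum ℳ S y U N n + hilbertSum ℳ S y N X n = hilbertSum ℳ S y U X n
      + weightedSum ℳ (weight y (S.scale n)) (ρ (U ⊔ S.ideal n • N))
          (ρ (N ⊓ (U ⊔ S.ideal n • X))) := by
  have hUN_hom := isHomogeneous_sup_ideal_smul S hU hN n
  have hUX_hom := isHomogeneous_sup_ideal_smul S hU hX n
  have hinf : X ⊓ (N ⊔ S.ideal n • X) = N ⊔ (U ⊔ S.ideal n • X) := by
    rw [inf_eq_right.2 (sup_le hNX Submodule.smul_le_right), ← sup_assoc, sup_eq_left.2 hUN]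
  have hsplitX : hilbertSum ℳ S y U X n = weightedSum ℳ (weight y (S.scale n))
      (ρ (U ⊔ S.ideal n • X)) (ρ N) + hilbertSum ℳ S y N X n := by
    rw [hilbertSum, weightedSum_eq_inf_add _ (W := ρ (U ⊔ S.ideal n • X))
      (V := ρ (N ⊔ S.ideal n • X)) hUX_hom (isHomogeneous_sup_ideal_smul S hN hX n)
      (sup_le_sup_right hUN _ : U ⊔ S.ideal n • X ≤ N ⊔ S.ideal n • X) hfin,
      ← Submodule.restrictScalars_inf, hinf, Submodule.restrictScalars_sup k N,
      weightedSum_sup_self _ hUX_hom hN, hilbertSum]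
  have hsplitN := weightedSum_eq_inf_add (weight y (S.scale n)) (W := ρ (U ⊔ S.ideal n • N))
    (V := ρ (U ⊔ S.ideal n • X)) hUN_hom hUX_hom
    (sup_le_sup_left (Submodule.smul_mono le_rfl hNX) U :
      U ⊔ S.ideal n • N ≤ U ⊔ S.ideal n • X) hfinN
  rw [hsplitX, hilbertSum, hsplitN, Submodule.restrictScalars_inf]
  ring

end HilbertSum

section Additivity

variable {k B M : Type*} [Field k] [CommRing B] [Algebra k B]
  [AddCommGroup M] [Module B M] [Module k M] [IsScalarTower k B M]
  {𝒜 : ℤ → Submodule k B} [GradedAlgebra 𝒜] {ℳ : ℤ → Submodule k M}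
  [DirectSum.Decomposition ℳ] [SetLike.GradedSMul 𝒜 ℳ]

local notation "ρ" => Submodule.restrictScalars k

variable (𝒜) in
lemma weightedSum_sup_span_singleton (y : ℂ) (q : ℕ) {W N : Submodule B M}
    (hN : N.IsHomogeneous ℳ) (hNW : N ≤ W) {t : ℤ} {z : M}
    (hz : z ∈ ℳ t) :
    weightedSum ℳ (weight y q) (ρ W) (ρ (N ⊔ B ∙ z)) =
      weight y q t * weightedSum 𝒜 (weight y q) (ρ (W.colon {z})) ⊤ := by
  let f : B →ₗ[k] M := (LinearMap.toSpanSingleton B M z).restrictScalars k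
  have hlength : ∀ j, relLength (ρ W) (ρ (N ⊔ B ∙ z) ⊓ ℳ (j + t)) =
      relLength (ρ (W.colon {z})) (⊤ ⊓ 𝒜 j) := by
    intro j
    rw [← relLength_map_eq f (W' := ρ W) fun b _ => Submodule.mem_colon_singleton]
    refine le_antisymm (relLength_mono_of_le_sup le_rfl ?_) (relLength_mono_right _ ?_)
    · rintro x ⟨hx, hxj⟩
      obtain ⟨n, hn, _, hb, rfl⟩ := Submodule.mem_sup.1 hx
      obtain ⟨b, rfl⟩ := Submodule.mem_span_singleton.1 hb
      rw [← DirectSum.decompose_of_mem_same ℳ hxj, DirectSum.decompose_add, DirectSum.add_apply,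
        Submodule.coe_add, decompose_smul_add 𝒜 hz, add_comm]
      exact Submodule.add_mem_sup ⟨_, ⟨trivial, SetLike.coe_mem _⟩, rfl⟩ (hNW (hN _ hn))
    · rintro _ ⟨b, ⟨-, hb⟩, rfl⟩
      exact ⟨Submodule.mem_sup_right (Submodule.smul_mem _ _ (Submodule.mem_span_singleton_self z)),
        SetLike.GradedSMul.smul_mem hb hz⟩
  rw [weightedSum, weightedSum, ← (Equiv.addRight t).tsum_eq, ← tsum_mul_left]
  refine tsum_congr fun j => ?_
  rw [Equiv.coe_addRight, hlength, weight_add]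
  ring

lemma IsNegligible.weight_sub_one_mul {q : ℕ → ℕ} (hq : ∀ n, 0 < q n) {d : ℕ} {f : ℕ → ℂ}
    (hf : IsNegligible q (d + 1) f) (y : ℂ) (t : ℤ) :
    IsNegligible q d fun n => (weight y (q n) t - 1) * f n := by
  have hweight : (fun n => weight y (q n) t - 1) =O[⊤] fun n => (1 : ℝ) / q n :=
    Asymptotics.IsBigO.of_bound (‖y‖ * |(t : ℝ)| * Real.exp (‖y‖ * |(t : ℝ)|))
      (eventually_top.2 fun n => by simpa [div_eq_mul_inv] using norm_weight_sub_one_le y (hq n) t)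
  refine (hweight.mul hf).congr_right fun n => ?_
  have : (q n : ℝ) ≠ 0 := by exact_mod_cast (hq n).ne'
  rw [pow_succ]
  field_simp

lemma colon_singleton_sup_ideal_smul (J : Ideal B) (N : Submodule B M) (m : M) :
    (N ⊔ J • (N ⊔ B ∙ m)).colon {m} = N.colon {m} ⊔ J := by
  rw [Submodule.smul_sup, ← sup_assoc, sup_eq_left.2 (Submodule.smul_le_right : J • N ≤ N)]
  ext b
  simp only [Submodule.mem_colon_singleton, Submodule.mem_sup, Submodule.mem_smul_span_singleton]
  constructor
  · rintro ⟨n, hn, _, ⟨c, hc, rfl⟩, h⟩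
    exact ⟨b - c, by rwa [sub_smul, ← h, add_sub_cancel_right], c, hc, sub_add_cancel b c⟩
  · rintro ⟨a, ha, c, hc, rfl⟩
    exact ⟨a • m, ha, c • m, ⟨c, hc, rfl⟩, (add_smul a c m).symm⟩

lemma smul_mem_sup_of_mem_sup_colon {J 𝔞 : Ideal B} {U N : Submodule B M} (hUN : U ≤ N) {m : M}
    (h𝔞 : ∀ a ∈ 𝔞, a • m ∈ U) {s : B}
    (hs : s ∈ N.colon {m} ⊔ 𝔞.colon (N.colon {m} : Set B)) {x : M} (hx : x ∈ N)
    (hxJ : x ∈ U ⊔ J • (N ⊔ B ∙ m)) : s • x ∈ U ⊔ J • N := by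
  obtain ⟨t, ht, a, ha, rfl⟩ := Submodule.mem_sup.1 hs
  rw [Submodule.smul_sup, ← sup_assoc] at hxJ
  obtain ⟨v, hv, _, hcm, rfl⟩ := Submodule.mem_sup.1 hxJ
  obtain ⟨c, hc, rfl⟩ := Submodule.mem_smul_span_singleton.1 hcm
  have hvN : v ∈ N := sup_le hUN Submodule.smul_le_right hv
  have hcQ : c ∈ N.colon {m} :=
    Submodule.mem_colon_singleton.2 ((N.add_mem_iff_right hvN).1 hx)
  have htc : t • c • m ∈ U ⊔ J • N := by
    rw [smul_comm]
    exact Submodule.mem_sup_right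
      (Submodule.smul_mem_smul hc (Submodule.mem_colon_singleton.1 ht))
  have hac : a • c • m ∈ U ⊔ J • N := by
    rw [smul_smul]
    exact Submodule.mem_sup_left (h𝔞 _ (Submodule.mem_colon.1 ha c hcQ))
  rw [smul_add, add_smul t a (c • m)]
  exact add_mem (Submodule.smul_mem _ _ hv) (add_mem htc hac)

variable (S : GradedIdealSystem 𝒜) (y : ℂ) {d : ℕ} {𝔞 : Ideal B} [IsNoetherian B M]

lemma hasGrowthBelow_relLength_inf_sup (h𝔞 : QuotDimLT (d + 1) 𝔞) (hr : 𝔞.IsRadical)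
    {U N : Submodule B M} {m : M} (hUN : U ≤ N) (hQ : (N.colon {m}).IsPrime)
    (h : ∀ a ∈ 𝔞, ∀ x ∈ N ⊔ B ∙ m, a • x ∈ U) :
    HasGrowthBelow S.scale d fun n =>
      relLength (ρ (U ⊔ S.ideal n • N)) (ρ (N ⊓ (U ⊔ S.ideal n • (N ⊔ B ∙ m)))) := by
  have := S.isNoetherianRing
  have hm : ∀ a ∈ 𝔞, a • m ∈ U := fun a ha =>
    h a ha m (Submodule.mem_sup_right (Submodule.mem_span_singleton_self m))
  have hle : 𝔞 ≤ N.colon {m} := fun a ha => Submodule.mem_colon_singleton.2 (hUN (hm a ha))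
  obtain ⟨s, hs, hdim⟩ := exists_mem_quotDimLT_sup_span h𝔞 (h𝔞.sup_colon hr hle)
  let f : M →ₗ[k] M := (LinearMap.lsmul B M s).restrictScalars k
  have hU : ∀ b ∈ 𝔞 ⊔ Ideal.span {s}, ∀ x ∈ N, b • x ∈ U ⊔ N.map (LinearMap.lsmul B M s) := by
    intro b hb x hx
    obtain ⟨a, ha, c, hc, rfl⟩ := Submodule.mem_sup.1 hb
    obtain ⟨c, rfl⟩ := Ideal.mem_span_singleton'.1 hc
    rw [add_smul, mul_comm, mul_smul]
    exact Submodule.add_mem_sup (h a ha x (Submodule.mem_sup_left hx))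
      (Submodule.mem_map_of_mem (f := LinearMap.lsmul B M s) (N.smul_mem c hx))
  refine (S.hasGrowthBelow_relLength hdim (IsNoetherian.noetherian N) hU).mono fun n => ?_
  have hfin : relLength (ρ (U ⊔ S.ideal n • N)) (ρ N) ≠ ⊤ :=
    (S.hasGrowthBelow_relLength h𝔞 (IsNoetherian.noetherian N) fun a ha x hx =>
      h a ha x (Submodule.mem_sup_left hx)).ne_top S.scale_pos n
  calc relLength (ρ (U ⊔ S.ideal n • N)) (ρ (N ⊓ (U ⊔ S.ideal n • (N ⊔ B ∙ m))))
      ≤ relLength (ρ (U ⊔ S.ideal n • N)) (ρ N ⊓ (ρ (U ⊔ S.ideal n • N)).comap f) :=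
        relLength_mono_right _ fun x hx =>
          ⟨hx.1, smul_mem_sup_of_mem_sup_colon hUN hm hs hx.1 hx.2⟩
    _ = relLength (ρ (U ⊔ S.ideal n • N) ⊔ (ρ N).map f) (ρ N) :=
        relLength_inf_comap f (fun _ hx => (U ⊔ S.ideal n • N).smul_mem s hx)
          (fun _ hx => N.smul_mem s hx) hfin
    _ ≤ relLength (ρ (U ⊔ N.map (LinearMap.lsmul B M s) ⊔ S.ideal n • N)) (ρ N) := by
        refine relLength_anti_left ?_ _
        rw [sup_right_comm, Submodule.restrictScalars_sup]
        exact sup_le_sup_left (fun _ hx => hx) _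

variable {U N X : Submodule B M}

lemma isNegligible_hilbertSum_sup_span_singleton_sub (h𝔞 : QuotDimLT (d + 1) 𝔞)
    (hr : 𝔞.IsRadical) (hU : U.IsHomogeneous ℳ) (hN : N.IsHomogeneous ℳ) (hUN : U ≤ N) {t : ℤ}
    {m : M} (hm : m ∈ ℳ t) (hQ : (N.colon {m}).IsPrime)
    (h : ∀ a ∈ 𝔞, ∀ x ∈ N ⊔ B ∙ m, a • x ∈ U) :
    IsNegligible S.scale d fun n => hilbertSum ℳ S y U (N ⊔ B ∙ m) n - hilbertSum ℳ S y U N n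
      - hilbertSum 𝒜 S y (N.colon {m}) ⊤ n := by
  have hX : (N ⊔ B ∙ m).IsHomogeneous ℳ :=
    isHomogeneous_sup hN (isHomogeneous_span 𝒜 (by rintro _ rfl; exact ⟨t, hm⟩))
  have hXfg : (N ⊔ B ∙ m).FG := IsNoetherian.noetherian _
  have hNX : N ≤ N ⊔ B ∙ m := le_sup_left
  have hdimQ : QuotDimLT (d + 1) (N.colon {m}) := h𝔞.mono fun a ha =>
    Submodule.mem_colon_singleton.2
      (hUN (h a ha m (Submodule.mem_sup_right (Submodule.mem_span_singleton_self m))))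
  have hcyclic : ∀ n, hilbertSum ℳ S y N (N ⊔ B ∙ m) n =
      weight y (S.scale n) t * hilbertSum 𝒜 S y (N.colon {m}) ⊤ n := fun n => by
    rw [hilbertSum, weightedSum_sup_span_singleton 𝒜 y _ hN le_sup_left hm,
      colon_singleton_sup_ideal_smul, hilbertSum, smul_eq_mul, Ideal.mul_top,
      Submodule.restrictScalars_top]
  have herror : IsNegligible S.scale d fun n =>
      weightedSum ℳ (weight y (S.scale n)) (ρ (U ⊔ S.ideal n • N))
        (ρ (N ⊓ (U ⊔ S.ideal n • (N ⊔ B ∙ m)))) :=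
    isNegligible_weightedSum S y hN (IsNoetherian.noetherian N)
      (isHomogeneous_sup_ideal_smul S hU hN) (fun n x hx => hx.1)
      (fun n => (le_sup_right : S.ideal n • N ≤ U ⊔ S.ideal n • N))
      (hasGrowthBelow_relLength_inf_sup S h𝔞 hr hUN hQ h)
  have htwist := (isNegligible_hilbertSum S y (𝔟 := N.colon {m})
    (isHomogeneous_colon_singleton hN hm) (isHomogeneous_top (ℳ := 𝒜)) ⟨{1}, by simp⟩ hdimQ
    fun b hb x _ => Ideal.mul_mem_right x _ hb).weight_sub_one_mul S.scale_pos y t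
  refine (htwist.sub herror).congr_left fun n => ?_
  have hsum := hilbertSum_add_hilbertSum S y hU hN hX hUN hNX n
    ((S.hasGrowthBelow_relLength h𝔞 hXfg h).ne_top S.scale_pos n)
    ((S.hasGrowthBelow_relLength h𝔞 (IsNoetherian.noetherian N) fun a ha x hx =>
      h a ha x (hNX hx)).ne_top S.scale_pos n)
  rw [hcyclic] at hsum
  linear_combination hsum

theorem isNegligible_hilbertSum_sub_sub (h𝔞 : QuotDimLT (d + 1) 𝔞) (hr : 𝔞.IsRadical)
    (hU : U.IsHomogeneous ℳ) (hN : N.IsHomogeneous ℳ) (hX : X.IsHomogeneous ℳ) (hUN : U ≤ N)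
    (hNX : N ≤ X) (h : ∀ a ∈ 𝔞, ∀ x ∈ X, a • x ∈ U) :
    IsNegligible S.scale d fun n =>
      hilbertSum ℳ S y U X n - hilbertSum ℳ S y U N n - hilbertSum ℳ S y N X n := by
  have := S.isNoetherianRing
  refine homogeneous_prime_filtration_induction 𝒜 hN hX hNX (fun Y => IsNegligible S.scale d
    fun n => hilbertSum ℳ S y U Y n - hilbertSum ℳ S y U N n - hilbertSum ℳ S y N Y n) ?_ ?_
  · simpa [hilbertSum_self] using isNegligible_zero
  · intro Y m t hY hNY hYX hm hQ hmotive
    have hstep := isNegligible_hilbertSum_sup_span_singleton_sub S y h𝔞 hr hU hY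
      (hUN.trans hNY) hm hQ fun a ha x hx => h a ha x (hYX hx)
    have hstepN := isNegligible_hilbertSum_sup_span_singleton_sub S y h𝔞 hr hN hY hNY hm hQ
      fun a ha x hx => hUN (h a ha x (hYX hx))
    exact ((hstep.sub hstepN).add hmotive).congr_left fun n => by ring

theorem exists_isNegligible_hilbertSum_sub_mul [h𝔞p : 𝔞.IsPrime] (h𝔞 : QuotDimLT (d + 1) 𝔞)
    (hU : U.IsHomogeneous ℳ) (hX : X.IsHomogeneous ℳ) (hUX : U ≤ X)
    (h : ∀ a ∈ 𝔞, ∀ x ∈ X, a • x ∈ U) :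
    ∃ r : ℕ, IsNegligible S.scale d fun n =>
      hilbertSum ℳ S y U X n - r * hilbertSum 𝒜 S y 𝔞 ⊤ n := by
  have := S.isNoetherianRing
  refine homogeneous_prime_filtration_induction 𝒜 hU hX hUX (fun Y => ∃ r : ℕ,
    IsNegligible S.scale d fun n => hilbertSum ℳ S y U Y n - r * hilbertSum 𝒜 S y 𝔞 ⊤ n)
    ⟨0, by simpa [hilbertSum_self] using isNegligible_zero⟩ ?_
  rintro N m t hN hUN hNX hm hQ ⟨r, hmotive⟩
  have hstep := isNegligible_hilbertSum_sup_span_singleton_sub S y h𝔞 h𝔞p.isRadical hU hN hUN hm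
    hQ fun a ha x hx => h a ha x (hNX hx)
  have hle : 𝔞 ≤ N.colon {m} := fun a ha => Submodule.mem_colon_singleton.2 (hUN (h a ha m
    (hNX (Submodule.mem_sup_right (Submodule.mem_span_singleton_self m)))))
  obtain heq | hlt := hle.eq_or_lt
  · refine ⟨r + 1, (hstep.add hmotive).congr_left fun n => ?_⟩
    rw [← heq]
    push_cast
    ring
  · have hsmall := isNegligible_hilbertSum S y (isHomogeneous_colon_singleton hN hm)
      (isHomogeneous_top (ℳ := 𝒜)) ⟨{1}, by simp⟩ (h𝔞.of_isPrime_lt hlt)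
      fun b hb x _ => Ideal.mul_mem_right x _ hb
    exact ⟨r, ((hstep.add hsmall).add hmotive).congr_left fun n => by ring⟩

end Additivity

/-! ### Linear independence of `p`-th powers -/

section PowLinearIndependent

open scoped TensorProduct

lemma exists_forall_isNilpotent_pow_pow_eq_zero (S : Type*) [CommRing S] [IsNoetherianRing S]
    {p : ℕ} (hp : 1 < p) : ∃ N : ℕ, ∀ w : S, IsNilpotent w → w ^ p ^ N = 0 := by
  obtain ⟨N, hN⟩ := IsNoetherianRing.isNilpotent_nilradical S
  refine ⟨N, fun w hw => pow_eq_zero_of_le (Nat.lt_pow_self hp).le ?_⟩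
  rw [← Ideal.mem_bot, ← Ideal.zero_eq_bot, ← hN]
  exact Ideal.pow_mem_pow hw N

/-- The submodule `V` satisfies the Mac Lane linear disjointness condition: the `p`-th power map
preserves the `k`-linear independence of its subsets. -/
def PowLinearIndependent (p : ℕ) {k D : Type*} [Field k] [CommRing D] [Algebra k D]
    (V : Submodule k D) : Prop :=
  ∀ s : Set D, s ⊆ V → LinearIndepOn k id s → LinearIndepOn k (· ^ p) s

variable {k D : Type*} [Field k] [CommRing D] [Algebra k D]

lemma tmul_mem_range_iterateFrobenius {K : Type*} [Field K] [IsAlgClosed K] [Algebra k K] (p : ℕ)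
    [ExpChar (K ⊗[k] D) p] {n : ℕ} (a : K) {v : D}
    (hv : v ∈ Submodule.span k (Set.range fun z : D => z ^ p ^ n)) :
    a ⊗ₜ[k] v ∈ (iterateFrobenius (K ⊗[k] D) p n).range := by
  have exists_root (a : K) : ∃ b : K, b ^ p ^ n = a :=
    IsAlgClosed.exists_pow_nat_eq a (pow_pos (expChar_pos (K ⊗[k] D) p) n)
  induction hv using Submodule.span_induction generalizing a with
  | mem v hv =>
    obtain ⟨u, rfl⟩ := hv
    obtain ⟨b, rfl⟩ := exists_root a
    exact ⟨b ⊗ₜ u, by rw [iterateFrobenius_def, Algebra.TensorProduct.tmul_pow]⟩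
  | zero => rw [TensorProduct.tmul_zero]; exact Subring.zero_mem _
  | add v w _ _ hv hw => rw [TensorProduct.tmul_add]; exact Subring.add_mem _ (hv a) (hw a)
  | smul c v _ hv => rw [← TensorProduct.smul_tmul]; exact hv (c • a)

/-- Over an algebraic closure `K`, a relation `∑ cᵢ xᵢᵖ = 0` makes `z = ∑ cᵢ^(1/p) ⊗ xᵢ` nilpotent.
Being itself a high `p`-power, `z` is then zero. -/
theorem exists_powLinearIndependent_span_range_pow (k D : Type*) [Field k] [CommRing D]
    [Algebra k D] [Algebra.FiniteType k D] [Nontrivial D] (p : ℕ) [Fact p.Prime] [CharP k p] :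
    ∃ N : ℕ, PowLinearIndependent p (Submodule.span k (Set.range fun z : D => z ^ p ^ N)) := by
  let K := AlgebraicClosure k
  have hp : p.Prime := Fact.out
  have : CharP K p := charP_of_injective_algebraMap (algebraMap k K).injective p
  have : CharP (K ⊗[k] D) p := charP_of_injective_algebraMap (algebraMap K _).injective p
  have : ExpChar (K ⊗[k] D) p := ExpChar.prime hp
  have : IsNoetherianRing (K ⊗[k] D) := Algebra.FiniteType.isNoetherianRing K _
  obtain ⟨N, hN⟩ := exists_forall_isNilpotent_pow_pow_eq_zero (K ⊗[k] D) hp.one_lt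
  refine ⟨N, fun s hs hli => linearIndependent_iff'.2 fun t c hc i hi => ?_⟩
  choose γ hγ using fun x : s => IsAlgClosed.exists_pow_nat_eq (algebraMap k K (c x)) hp.pos
  set z : K ⊗[k] D := ∑ x ∈ t, γ x ⊗ₜ (x : D) with hz
  have tmul_pow (x : s) : (γ x ⊗ₜ[k] (x : D)) ^ p = (1 : K) ⊗ₜ[k] (c x • (x : D) ^ p) := by
    rw [Algebra.TensorProduct.tmul_pow, hγ, Algebra.algebraMap_eq_smul_one,
      TensorProduct.smul_tmul]
  have pow_eq_zero : z ^ p = 0 := by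
    rw [hz, sum_pow_char, Finset.sum_congr rfl fun x _ => tmul_pow x, ← TensorProduct.tmul_sum, hc,
      TensorProduct.tmul_zero]
  obtain ⟨w, hw⟩ : z ∈ (iterateFrobenius (K ⊗[k] D) p N).range :=
    Subring.sum_mem _ fun x _ => tmul_mem_range_iterateFrobenius p _ (hs x.2)
  rw [iterateFrobenius_def] at hw
  have z_eq_zero : z = 0 := by
    rw [← hw]
    exact hN w ⟨p ^ N * p, by rw [pow_mul, hw, pow_eq_zero]⟩
  have γ_eq_zero : γ i = 0 := by
    refine linearIndependent_iff'.1
      (Module.Flat.linearIndependent_one_tmul (S := K) hli.linearIndependent) t γ ?_ i hi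
    rw [← z_eq_zero, hz]
    refine Finset.sum_congr rfl fun x _ => ?_
    rw [TensorProduct.smul_tmul', smul_eq_mul, mul_one]
    rfl
  rw [← map_eq_zero (algebraMap k K), ← hγ, γ_eq_zero, zero_pow hp.ne_zero]

end PowLinearIndependent

section PowSpan

variable {k D : Type*} [Field k] [CommRing D] [Algebra k D]

/-- The `k`-span of the `p`-th powers of the elements of `X`; in characteristic `p` it is the
`k`-span of the image of `X` under Frobenius. -/
def powSpan (p : ℕ) (X : Submodule k D) : Submodule k D := Submodule.span k ((· ^ p) '' X)

variable {p : ℕ}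

lemma pow_mem_powSpan {X : Submodule k D} {x : D} (hx : x ∈ X) : x ^ p ∈ powSpan p X :=
  Submodule.subset_span ⟨x, hx, rfl⟩

lemma powSpan_mono {X Y : Submodule k D} (h : X ≤ Y) : powSpan p X ≤ powSpan p Y :=
  Submodule.span_mono (Set.image_mono h)

lemma map_powSpan {D' : Type*} [CommRing D'] [Algebra k D'] (f : D →ₐ[k] D') (X : Submodule k D) :
    (powSpan p X).map f.toLinearMap = powSpan p (X.map f.toLinearMap) := by
  simp only [powSpan, Submodule.map_span, Submodule.map_coe, Set.image_image,
    AlgHom.toLinearMap_apply, map_pow]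

variable [Fact p.Prime] [CharP D p]

lemma powSpan_span (s : Set D) :
    powSpan p (Submodule.span k s) = Submodule.span k ((· ^ p) '' s) := by
  refine le_antisymm (Submodule.span_le.2 ?_)
    (Submodule.span_mono (Set.image_mono Submodule.subset_span))
  rintro _ ⟨x, hx, rfl⟩
  change x ^ p ∈ _
  induction hx using Submodule.span_induction with
  | mem x hx => exact Submodule.subset_span ⟨x, hx, rfl⟩
  | zero => rw [zero_pow (Fact.out : p.Prime).ne_zero]; exact Submodule.zero_mem _
  | add x y _ _ hx hy => rw [add_pow_char]; exact Submodule.add_mem _ hx hy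
  | smul c x _ hx => rw [smul_pow]; exact Submodule.smul_mem _ _ hx

lemma powSpan_sup (X Y : Submodule k D) : powSpan p (X ⊔ Y) = powSpan p X ⊔ powSpan p Y := by
  rw [← Submodule.span_eq X, ← Submodule.span_eq Y, ← Submodule.span_union, powSpan_span,
    powSpan_span, powSpan_span, Set.image_union, Submodule.span_union]

omit [Fact p.Prime] [CharP D p] in
lemma relLength_span_image {ι M : Type*} [AddCommGroup M] [Module k M] {v : ι → M} {s t : Set ι}
    (hst : s ⊆ t) (h : LinearIndepOn k v t) :
    relLength (Submodule.span k (v '' s)) (Submodule.span k (v '' t)) = (t \ s).encard := by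
  have hli := ((linearIndepOn_union_iff_quotient Set.disjoint_sdiff_right).1
    ((Set.union_sdiff_cancel hst).symm ▸ h)).2
  rw [← toENat_rank_span_set hli, ← Module.length_eq_rank, Set.image_comp, ← Submodule.map_span,
    ← relLength, ← relLength_sup_self _ (Submodule.span k (v '' (t \ s))), ← Submodule.span_union,
    ← Set.image_union, Set.sdiff_union_of_subset hst]

theorem relLength_powSpan {V W X : Submodule k D} (hV : PowLinearIndependent p V) (hW : W ≤ V)
    (hX : X ≤ V) : relLength (powSpan p W) (powSpan p X) = relLength W X := by
  obtain ⟨b, hbW, hb, hbli⟩ := exists_linearIndependent k (W : Set D)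
  obtain ⟨c, hc, hbc, hcs, hcli⟩ :=
    exists_linearIndepOn_id_extension hbli (hbW.trans (le_sup_right : W ≤ X ⊔ W))
  have hW' : W = Submodule.span k b := by rw [hb, Submodule.span_eq]
  have hX' : X ⊔ W = Submodule.span k c := le_antisymm hcs (Submodule.span_le.2 hc)
  have hpow : LinearIndepOn k (· ^ p) c := hV c (hc.trans (sup_le hX hW)) hcli
  rw [← relLength_sup_self, ← powSpan_sup, ← relLength_sup_self W, hX', hW', powSpan_span,
    powSpan_span, relLength_span_image hbc hpow]
  simpa only [Set.image_id] using (relLength_span_image hbc hcli).symm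

end PowSpan

/-! ### The subalgebras generated by Frobenius powers -/

section SubalgebraGrading

variable {k R : Type*} [Field k] [CommRing R] [Algebra k R] (𝒜 : ℤ → Submodule k R)
  (C : Subalgebra k R)

/-- The grading induced on a subalgebra. -/
def subalgebraGrading (j : ℤ) : Submodule k C := (𝒜 j).comap C.val.toLinearMap

variable [GradedAlgebra 𝒜]

lemma iSupIndep_subalgebraGrading : iSupIndep (subalgebraGrading 𝒜 C) := by
  intro i
  have map_iSup_le : (⨆ j, ⨆ _ : j ≠ i, subalgebraGrading 𝒜 C j).map C.val.toLinearMap ≤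
      ⨆ j, ⨆ _ : j ≠ i, 𝒜 j := by
    simp_rw [Submodule.map_iSup]
    exact iSup₂_mono fun j _ => Submodule.map_comap_le _ _
  rw [Submodule.disjoint_def]
  intro x hi hx
  exact Subtype.ext (Submodule.disjoint_def.1 ((DirectSum.Decomposition.isInternal
    𝒜).submodule_iSupIndep i) x hi (map_iSup_le ⟨x, hx, rfl⟩))

variable {C}

lemma iSup_subalgebraGrading (hC : (Subalgebra.toSubmodule C).IsHomogeneous 𝒜) :
    ⨆ j, subalgebraGrading 𝒜 C j = ⊤ := by
  classical
  refine eq_top_iff.2 fun x _ => ?_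
  have hx : x = ∑ j ∈ (DirectSum.decompose 𝒜 (x : R)).support,
      (⟨DirectSum.decompose 𝒜 (x : R) j, hC j x.2⟩ : C) := by
    refine Subtype.ext ?_
    rw [AddSubmonoidClass.coe_finsetSum]
    exact (DirectSum.sum_support_decompose 𝒜 (x : R)).symm
  rw [hx]
  exact Submodule.sum_mem _ fun j _ => le_iSup (subalgebraGrading 𝒜 C) j
    (SetLike.coe_mem (DirectSum.decompose 𝒜 (x : R) j))

/-- A homogeneous subalgebra is graded by the induced grading. -/
@[reducible] def gradedAlgebraSubalgebra (hC : (Subalgebra.toSubmodule C).IsHomogeneous 𝒜) :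
    GradedAlgebra (subalgebraGrading 𝒜 C) where
  one_mem := SetLike.GradedOne.one_mem (A := 𝒜)
  mul_mem _ _ _ _ hx hy := SetLike.mul_mem_graded (A := 𝒜) hx hy
  __ := (DirectSum.isInternal_submodule_of_iSupIndep_of_iSup_eq_top
    (iSupIndep_subalgebraGrading 𝒜 C) (iSup_subalgebraGrading 𝒜 hC)).chooseDecomposition

lemma isHomogeneous_comap_subalgebra [GradedAlgebra (subalgebraGrading 𝒜 C)] {𝔠 : Ideal R}
    (h : 𝔠.IsHomogeneous 𝒜) : (𝔠.comap C.val).IsHomogeneous (subalgebraGrading 𝒜 C) :=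
  (HomogeneousIdeal.comap (⟨C.val, id⟩ : subalgebraGrading 𝒜 C →+*ᵍ 𝒜)
    ⟨𝔠, h⟩).isHomogeneous

end SubalgebraGrading

section FrobeniusSubalgebra

variable (k R : Type*) [Field k] [CommRing R] [Algebra k R] (p : ℕ)

/-- The `k`-subalgebra `k[R^{p^e}]` of `R`. -/
def frobeniusSubalgebra (e : ℕ) : Subalgebra k R :=
  Algebra.adjoin k (Set.range fun x : R => x ^ p ^ e)

lemma toSubmodule_frobeniusSubalgebra (e : ℕ) :
    Subalgebra.toSubmodule (frobeniusSubalgebra k R p e) =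
      Submodule.span k (Set.range fun x : R => x ^ p ^ e) := by
  have hrange : (Set.range fun x : R => x ^ p ^ e) =
      (MonoidHom.mrange (powMonoidHom (p ^ e) : R →* R) : Set R) := by ext; simp
  rw [frobeniusSubalgebra, Algebra.adjoin_eq_span, hrange, Submonoid.closure_eq]

variable {R}

lemma pow_mem_frobeniusSubalgebra (e n : ℕ) (x : R) :
    x ^ p ^ (e + n) ∈ frobeniusSubalgebra k R p e :=
  Algebra.subset_adjoin ⟨x ^ p ^ n, by simp only [← pow_mul, ← pow_add, add_comm]⟩

variable {k p} in
lemma frobeniusSubalgebra_zero : frobeniusSubalgebra k R p 0 = ⊤ :=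
  eq_top_iff.2 fun x _ => by simpa using pow_mem_frobeniusSubalgebra k p 0 0 x

variable {k} in
lemma map_frobeniusSubalgebra_le {D : Type*} [CommRing D] [Algebra k D] (f : R →ₐ[k] D) (e : ℕ) :
    (frobeniusSubalgebra k R p e).map f ≤ frobeniusSubalgebra k D p e := by
  rw [frobeniusSubalgebra, AlgHom.map_adjoin]
  refine Algebra.adjoin_mono ?_
  rintro _ ⟨_, ⟨x, rfl⟩, rfl⟩
  exact ⟨f x, (map_pow f x _).symm⟩

lemma frobeniusSubalgebra_antitone {e e' : ℕ} (h : e ≤ e') :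
    frobeniusSubalgebra k R p e' ≤ frobeniusSubalgebra k R p e := by
  obtain ⟨n, rfl⟩ := Nat.exists_eq_add_of_le h
  refine Algebra.adjoin_le ?_
  rintro _ ⟨x, rfl⟩
  exact pow_mem_frobeniusSubalgebra k p e n x

variable {p} [Fact p.Prime] [CharP R p] {𝒜 : ℤ → Submodule k R} [GradedAlgebra 𝒜]

lemma frobeniusSubalgebra_eq_adjoin_homogeneous (e : ℕ) :
    frobeniusSubalgebra k R p e =
      Algebra.adjoin k ((· ^ p ^ e) '' {x | SetLike.IsHomogeneousElem 𝒜 x}) := by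
  classical
  refine le_antisymm (Algebra.adjoin_le ?_) (Algebra.adjoin_mono (Set.image_subset_range _ _))
  rintro _ ⟨x, rfl⟩
  rw [SetLike.mem_coe, ← DirectSum.sum_support_decompose 𝒜 x]
  simp only [sum_pow_char_pow]
  exact Subalgebra.sum_mem _ fun j _ =>
    Algebra.subset_adjoin ⟨_, ⟨j, SetLike.coe_mem _⟩, rfl⟩

lemma isHomogeneous_frobeniusSubalgebra (e : ℕ) :
    (Subalgebra.toSubmodule (frobeniusSubalgebra k R p e)).IsHomogeneous 𝒜 := by
  rw [frobeniusSubalgebra_eq_adjoin_homogeneous k (𝒜 := 𝒜)]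
  have isHomogeneousElem : ∀ x ∈ Set.range (algebraMap k R) ∪
      (· ^ p ^ e) '' {x | SetLike.IsHomogeneousElem 𝒜 x}, SetLike.IsHomogeneousElem 𝒜 x := by
    rintro x (⟨c, rfl⟩ | ⟨y, ⟨j, hj⟩, rfl⟩)
    · exact ⟨0, SetLike.algebraMap_mem_graded _ _⟩
    · exact ⟨_, SetLike.pow_mem_graded _ hj⟩
  exact IsHomogeneous.subsemiringClosure_of_isHomogeneousElem isHomogeneousElem

instance (e : ℕ) : GradedAlgebra (subalgebraGrading 𝒜 (frobeniusSubalgebra k R p e)) :=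
  gradedAlgebraSubalgebra 𝒜 (isHomogeneous_frobeniusSubalgebra k e)

variable (p) in
/-- The iterated Frobenius `x ↦ x ^ p ^ (e + n)`, viewed as a map from `R` to `k[R^{p^e}]`. -/
def toFrobeniusSubalgebra (e n : ℕ) : R →+* frobeniusSubalgebra k R p e :=
  (iterateFrobenius R p (e + n)).codRestrict _ (pow_mem_frobeniusSubalgebra k p e n)

@[simp] lemma coe_toFrobeniusSubalgebra (e n : ℕ) (x : R) :
    (toFrobeniusSubalgebra k p e n x : R) = x ^ p ^ (e + n) := rfl

variable {k}

lemma toFrobeniusSubalgebra_mem {e n : ℕ} {x : R} {j : ℤ} (hx : x ∈ 𝒜 j) :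
    toFrobeniusSubalgebra k p e n x ∈
      subalgebraGrading 𝒜 (frobeniusSubalgebra k R p e) (p ^ (e + n) • j) :=
  SetLike.pow_mem_graded (p ^ (e + n)) hx

lemma isHomogeneous_map_toFrobeniusSubalgebra {I : Ideal R} (hI : I.IsHomogeneous 𝒜) (e n : ℕ) :
    (I.map (toFrobeniusSubalgebra k p e n)).IsHomogeneous
      (subalgebraGrading 𝒜 (frobeniusSubalgebra k R p e)) := by
  obtain ⟨s, rfl⟩ := (Ideal.IsHomogeneous.iff_exists 𝒜 I).1 hI
  rw [Ideal.map_span]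
  refine Ideal.homogeneous_span _ _ ?_
  rintro _ ⟨_, ⟨⟨x, j, hx⟩, -, rfl⟩, rfl⟩
  exact ⟨_, toFrobeniusSubalgebra_mem hx⟩

lemma adjoin_image_toFrobeniusSubalgebra {s : Set R} (hs : Algebra.adjoin k s = ⊤) (e : ℕ) :
    Algebra.adjoin k (toFrobeniusSubalgebra k p e 0 '' s) = ⊤ := by
  have map_le : frobeniusSubalgebra k R p e ≤
      (Algebra.adjoin k (toFrobeniusSubalgebra k p e 0 '' s)).map
        (frobeniusSubalgebra k R p e).val := by
    refine Algebra.adjoin_le ?_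
    rintro _ ⟨x, rfl⟩
    have hx : x ∈ Algebra.adjoin k s := hs ▸ trivial
    simp only [SetLike.mem_coe]
    induction hx using Algebra.adjoin_induction with
    | mem x hx => exact ⟨_, Algebra.subset_adjoin ⟨x, hx, rfl⟩, rfl⟩
    | algebraMap c => rw [← map_pow]; exact Subalgebra.algebraMap_mem _ _
    | add x y _ _ hx hy => rw [add_pow_char_pow]; exact Subalgebra.add_mem _ hx hy
    | mul x y _ _ hx hy => rw [mul_pow]; exact Subalgebra.mul_mem _ hx hy
  refine eq_top_iff.2 fun x _ => ?_
  obtain ⟨z, hz, hzx⟩ := map_le x.2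
  rwa [← Subtype.ext hzx]

end FrobeniusSubalgebra

section GradedDatum

variable {k R : Type*} [Field k] [CommRing R] [Algebra k R] (𝒜 : ℤ → Submodule k R)

/-- The standing hypotheses on `R` and `I`: the grading is concentrated in nonnegative degrees, its
degree-zero piece is `k`, and `I` is homogeneous of finite colength. -/
structure IsGradedDatum [GradedAlgebra 𝒜] (I : Ideal R) : Prop where
  eq_bot_of_neg : ∀ t < 0, 𝒜 t = ⊥
  zero_subset_range : ∀ x ∈ 𝒜 0, ∃ c : k, algebraMap k R c = x
  isHomogeneous : I.IsHomogeneous 𝒜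
  isFiniteLength : IsFiniteLength R (R ⧸ I)

variable {𝒜} [GradedAlgebra 𝒜] {I : Ideal R}

lemma IsGradedDatum.exists_generators_of_pos_degree (h : IsGradedDatum 𝒜 I)
    [Algebra.FiniteType k R] :
    ∃ s : Finset R, (∀ f ∈ s, ∃ d : ℕ, 0 < d ∧ f ∈ 𝒜 d) ∧ Algebra.adjoin k (s : Set R) = ⊤ := by
  classical
  obtain ⟨s, hs⟩ := (Algebra.FiniteType.out : (⊤ : Subalgebra k R).FG)
  refine ⟨s.biUnion fun x => ((DirectSum.decompose 𝒜 x).support.filter (0 < ·)).image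
    fun j => (DirectSum.decompose 𝒜 x j : R), fun f hf => ?_, ?_⟩
  · simp only [Finset.mem_biUnion, Finset.mem_image, Finset.mem_filter] at hf
    obtain ⟨x, -, j, ⟨-, hj⟩, rfl⟩ := hf
    exact ⟨j.toNat, by lia, by rw [Int.toNat_of_nonneg hj.le]; exact SetLike.coe_mem _⟩
  · rw [eq_top_iff, ← hs]
    refine Algebra.adjoin_le fun x hx => ?_
    rw [SetLike.mem_coe, ← DirectSum.sum_support_decompose 𝒜 x]
    refine Subalgebra.sum_mem _ fun j hj => ?_
    rcases lt_trichotomy j 0 with hneg | rfl | hpos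
    · have hzero := (h.eq_bot_of_neg j hneg).le (SetLike.coe_mem (DirectSum.decompose 𝒜 x j))
      exact (Submodule.mem_bot k).1 hzero ▸ Subalgebra.zero_mem _
    · obtain ⟨c, hc⟩ := h.zero_subset_range _ (DirectSum.decompose 𝒜 x 0).2
      exact hc ▸ Subalgebra.algebraMap_mem _ _
    · refine Algebra.subset_adjoin ?_
      simp only [Finset.mem_coe, Finset.mem_biUnion, Finset.mem_image, Finset.mem_filter]
      exact ⟨x, hx, j, ⟨hj, hpos⟩, rfl⟩

/-- Comparing the components of degree `n * d` in `f ^ n ≡ f ^ (n + 1) * r`: the component of `r`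
involved has negative degree. -/
lemma IsGradedDatum.exists_pow_mem (h : IsGradedDatum 𝒜 I) {f : R} {d : ℕ} (hd : 0 < d)
    (hf : f ∈ 𝒜 d) : ∃ a, f ^ a ∈ I := by
  have := (isFiniteLength_iff_isNoetherian_isArtinian.1 h.isFiniteLength).2
  obtain ⟨n, y, hy⟩ := IsArtinian.exists_pow_succ_smul_dvd f (1 : R ⧸ I)
  obtain ⟨r, rfl⟩ := Ideal.Quotient.mk_surjective y
  have hpow (m : ℕ) : f ^ m ∈ 𝒜 (m * d : ℤ) := by simpa using SetLike.pow_mem_graded m hf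
  have hmem : r • f ^ n.succ - f ^ n ∈ I := by
    rw [← Ideal.Quotient.eq, smul_eq_mul, mul_comm, map_mul]
    exact hy.trans ((Algebra.smul_def _ _).trans (mul_one _))
  have hneg : (DirectSum.decompose 𝒜 r (-d : ℤ) : R) = 0 :=
    (Submodule.mem_bot k).1 ((h.eq_bot_of_neg _ (by lia)).le (SetLike.coe_mem _))
  have hcomponent := h.isHomogeneous (n * d : ℤ) hmem
  rw [DirectSum.decompose_sub, DirectSum.sub_apply, AddSubgroupClass.coe_sub,
    DirectSum.decompose_of_mem_same _ (hpow n),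
    show (n * d : ℤ) = -d + n.succ * d by push_cast; ring,
    decompose_smul_add 𝒜 (hpow n.succ) r, hneg, zero_smul, zero_sub, neg_mem_iff] at hcomponent
  exact ⟨n, hcomponent⟩

lemma IsGradedDatum.exists_frobeniusSubalgebra_generators (h : IsGradedDatum 𝒜 I)
    [Algebra.FiniteType k R] (p : ℕ) [Fact p.Prime] [CharP R p] (e : ℕ) :
    ∃ (s : Finset (frobeniusSubalgebra k R p e)) (a : ℕ),
      (∀ f ∈ s, ∃ d : ℕ, f ∈ subalgebraGrading 𝒜 (frobeniusSubalgebra k R p e) d) ∧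
      Algebra.adjoin k (s : Set (frobeniusSubalgebra k R p e)) = ⊤ ∧
      ∀ f ∈ s, ∀ n, f ^ (a * p ^ n) ∈ I.map (toFrobeniusSubalgebra k p e n) := by
  classical
  obtain ⟨s, hdegree, hs⟩ := h.exists_generators_of_pos_degree
  have hpow : ∀ f ∈ s, ∃ a, f ^ a ∈ I := fun f hf =>
    let ⟨_, hd, hfd⟩ := hdegree f hf
    h.exists_pow_mem hd hfd
  choose! a ha using hpow
  refine ⟨s.image (toFrobeniusSubalgebra k p e 0), ∑ f ∈ s, a f, ?_, ?_, ?_⟩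
  · intro f hf
    obtain ⟨x, hx, rfl⟩ := Finset.mem_image.1 hf
    obtain ⟨d, -, hd⟩ := hdegree x hx
    exact ⟨p ^ (e + 0) * d, by simpa using toFrobeniusSubalgebra_mem (p := p) (e := e) (n := 0) hd⟩
  · rw [Finset.coe_image]
    exact adjoin_image_toFrobeniusSubalgebra hs e
  · intro f hf n
    obtain ⟨x, hx, rfl⟩ := Finset.mem_image.1 hf
    have hxI : x ^ ∑ f ∈ s, a f ∈ I :=
      Ideal.pow_mem_of_pow_mem _ (ha x hx) (Finset.single_le_sum_of_canonicallyOrdered hx)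
    convert Ideal.mem_map_of_mem (toFrobeniusSubalgebra k p e n) hxI using 1
    refine Subtype.ext ?_
    simp only [SubmonoidClass.coe_pow, coe_toFrobeniusSubalgebra, ← pow_mul]
    congr 1
    ring

/-- The ideals of `k[R^{p^e}]` generated by the powers `x ^ p ^ (e + n)` of the elements `x` of
`I`. -/
def IsGradedDatum.frobeniusIdealSystem (h : IsGradedDatum 𝒜 I) [Algebra.FiniteType k R]
    (p : ℕ) [Fact p.Prime] [CharP R p] (e : ℕ) :
    GradedIdealSystem (subalgebraGrading 𝒜 (frobeniusSubalgebra k R p e)) :=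
  let H := h.exists_frobeniusSubalgebra_generators p e
  { scale := fun n => p ^ n
    scale_pos := fun _ => pow_pos (Fact.out : p.Prime).pos _
    ideal := fun n => I.map (toFrobeniusSubalgebra k p e n)
    isHomogeneous_ideal := isHomogeneous_map_toFrobeniusSubalgebra h.isHomogeneous e
    gens := H.choose
    degree := fun f => by
      classical exact if hf : f ∈ H.choose then (H.choose_spec.choose_spec.1 f hf).choose else 0
    mem_degree := fun f hf => by
      simpa only [dif_pos hf] using (H.choose_spec.choose_spec.1 f hf).choose_spec
    adjoin_gens := H.choose_spec.choose_spec.2.1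
    exponent := H.choose_spec.choose
    pow_mem := H.choose_spec.choose_spec.2.2 }

end GradedDatum

/-! ### Frobenius–Hilbert sums -/

section FrobeniusHilbertSum

open scoped Pointwise

variable {k R : Type*} [Field k] [CommRing R] [Algebra k R]

local notation "ρ" => Submodule.restrictScalars k

lemma restrictScalars_span_smul {M : Type*} [AddCommGroup M] [Module R M] [Module k M]
    [IsScalarTower k R M] (s : Set R) (X : Submodule R M) :
    ρ (Ideal.span s • X) = s • ρ X := by
  rw [Submodule.span_smul_eq]
  refine le_antisymm (fun z hz => ?_) (Submodule.set_smul_le _ _ _ fun r v hr hv =>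
    Submodule.mem_set_smul_of_mem_mem (N := X) hr hv)
  replace hz : z ∈ s • X := hz
  induction z, hz using Submodule.set_smul_inductionOn with
  | smul₀ hr hv => exact Submodule.mem_set_smul_of_mem_mem hr hv
  | smul₁ r _ ih =>
    refine (Submodule.set_smul_le s (ρ X) ((s • ρ X).comap (Algebra.lsmul k k M r))
      fun a v ha hv => ?_) ih
    change r • a • v ∈ s • ρ X
    rw [smul_comm]
    exact Submodule.mem_set_smul_of_mem_mem ha (X.smul_mem r hv)
  | add _ _ ihu ihv => exact Submodule.add_mem _ ihu ihv
  | zero => exact Submodule.zero_mem _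

variable {p : ℕ} {𝒜 : ℤ → Submodule k R} {I : Ideal R}
  {M : Type*} [AddCommGroup M] [Module R M] [Module k M] [IsScalarTower k R M]
  {ℳ : ℤ → Submodule k M}

variable (p I) in
/-- The `k`-span of the products `x ^ p ^ m • v` with `x ∈ I` and `v ∈ X`. For an `R`-submodule `X`
it is `I^{[p^m]} X`; in general it is stable under those subrings of `R` that `X` is. -/
def bracketSMul (m : ℕ) (X : Submodule k M) : Submodule k M :=
  ((· ^ p ^ m) '' (I : Set R)) • X

lemma restrictScalars_bracketPow_smul (m : ℕ) (X : Submodule R M) :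
    ρ (bracketPow I (p ^ m) • X) = bracketSMul p I m (ρ X) :=
  restrictScalars_span_smul _ X

lemma restrictScalars_map_toFrobeniusSubalgebra_smul [Fact p.Prime] [CharP R p] (e n : ℕ)
    (X : Submodule (frobeniusSubalgebra k R p e) M) :
    ρ (I.map (toFrobeniusSubalgebra k p e n) • X) = bracketSMul p I (e + n) (ρ X) := by
  rw [Ideal.map, restrictScalars_span_smul, bracketSMul]
  refine le_antisymm (Submodule.set_smul_le _ _ _ ?_) (Submodule.set_smul_le _ _ _ ?_)
  · rintro _ v ⟨x, hx, rfl⟩ hv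
    exact Submodule.mem_set_smul_of_mem_mem (Set.mem_image_of_mem (· ^ p ^ (e + n)) hx) hv
  · rintro _ v ⟨x, hx, rfl⟩ hv
    exact Submodule.mem_set_smul_of_mem_mem
      (Set.mem_image_of_mem (toFrobeniusSubalgebra k p e n) hx) hv

variable (p I ℳ) in
/-- The sum `∑ⱼ λ((X / (U + I^{[p^m]} X))ⱼ) e^{-iyj/p^m}`. Viewing `X` and `U` as submodules over
the various `k[R^{p^e}]`, it is the sum attached to each of the systems `frobeniusIdealSystem`. -/
def frobeniusHilbertSum (y : ℂ) (U X : Submodule k M) (m : ℕ) : ℂ :=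
  weightedSum ℳ (weight y (p ^ m)) (U ⊔ bracketSMul p I m X) X

lemma weight_div_pow [Fact p.Prime] (y : ℂ) (e n : ℕ) :
    weight (y / (p : ℂ) ^ e) (p ^ n) = weight y (p ^ (e + n)) := by
  have : (p : ℂ) ≠ 0 := mod_cast (Fact.out : p.Prime).ne_zero
  ext j
  unfold weight
  congr 1
  push_cast
  rw [pow_add]
  field_simp

variable [GradedAlgebra 𝒜] [Algebra.FiniteType k R] [Fact p.Prime] [CharP R p]

lemma hilbertSum_frobeniusIdealSystem (h : IsGradedDatum 𝒜 I) (y : ℂ) (e n : ℕ)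
    (U X : Submodule (frobeniusSubalgebra k R p e) M) :
    hilbertSum ℳ (h.frobeniusIdealSystem p e) (y / (p : ℂ) ^ e) U X n =
      frobeniusHilbertSum p I ℳ y (ρ U) (ρ X) (e + n) := by
  simp only [hilbertSum, frobeniusHilbertSum, Submodule.restrictScalars_sup,
    IsGradedDatum.frobeniusIdealSystem, restrictScalars_map_toFrobeniusSubalgebra_smul,
    weight_div_pow]

omit [GradedAlgebra 𝒜] [Algebra.FiniteType k R] in
lemma weightedSum_toSubmodule {C : Subalgebra k R} (w : ℤ → ℂ) {W : Submodule k C}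
    {W' : Submodule k R} (h : ∀ c : C, c ∈ W ↔ (c : R) ∈ W') :
    weightedSum 𝒜 w W' (Subalgebra.toSubmodule C) = weightedSum (subalgebraGrading 𝒜 C) w W ⊤ := by
  have hpiece (j : ℤ) : Subalgebra.toSubmodule C ⊓ 𝒜 j =
      (⊤ ⊓ subalgebraGrading 𝒜 C j).map C.val.toLinearMap := by
    rw [top_inf_eq, subalgebraGrading, Submodule.map_comap_eq]
    congr 1
    ext x
    exact ⟨fun hx => ⟨⟨x, hx⟩, rfl⟩, by rintro ⟨x, rfl⟩; exact x.2⟩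
  simp only [weightedSum, hpiece]
  exact tsum_congr fun j => by rw [relLength_map_eq C.val.toLinearMap fun c _ => h c]

lemma hilbertSum_comap_frobeniusSubalgebra (h : IsGradedDatum 𝒜 I) (y : ℂ) (e n : ℕ)
    (𝔠 : Ideal R) :
    hilbertSum (subalgebraGrading 𝒜 (frobeniusSubalgebra k R p e)) (h.frobeniusIdealSystem p e)
        (y / (p : ℂ) ^ e) (𝔠.comap (frobeniusSubalgebra k R p e).val) ⊤ n =
      frobeniusHilbertSum p I 𝒜 y (ρ 𝔠)
        (Subalgebra.toSubmodule (frobeniusSubalgebra k R p e)) (e + n) := by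
  set C := frobeniusSubalgebra k R p e
  set J := I.map (toFrobeniusSubalgebra k p e n)
  have hrange : ρ ((⊤ : Submodule C C).map (Algebra.linearMap C R)) = Subalgebra.toSubmodule C := by
    ext x
    exact ⟨by rintro ⟨c, -, rfl⟩; exact c.2, fun hx => ⟨⟨x, hx⟩, trivial, rfl⟩⟩
  have hbracket : bracketSMul p I (e + n) (Subalgebra.toSubmodule C) =
      ρ (Submodule.map (Algebra.linearMap C R) J) := by
    rw [← hrange, ← restrictScalars_map_toFrobeniusSubalgebra_smul, ← Submodule.map_smul'',
      smul_eq_mul, Ideal.mul_top]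
  have hcomap : Submodule.comap (Algebra.linearMap C R)
      (𝔠.restrictScalars C ⊔ Submodule.map (Algebra.linearMap C R) J) = 𝔠.comap C.val ⊔ J := by
    have hle : Submodule.map (Algebra.linearMap C R) (𝔠.comap C.val) ≤
        𝔠.restrictScalars C := Submodule.map_comap_le _ (𝔠.restrictScalars C)
    rw [← sup_eq_right.2 hle, sup_right_comm, ← Submodule.map_sup]
    exact Submodule.comap_map_sup_of_comap_le le_sup_left
  symm
  simp only [hilbertSum, frobeniusHilbertSum, IsGradedDatum.frobeniusIdealSystem, weight_div_pow,
    smul_eq_mul, Ideal.mul_top]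
  refine weightedSum_toSubmodule _ fun c => ?_
  rw [hbracket, show ρ 𝔠 = ρ (𝔠.restrictScalars C) from rfl, ← Submodule.restrictScalars_sup]
  exact (SetLike.ext_iff.1 hcomap c).symm

end FrobeniusHilbertSum

section FrobeniusModule

variable {k R : Type*} [Field k] [CommRing R] [Algebra k R] {p : ℕ} [Fact p.Prime] [CharP R p]

lemma QuotDimLT.comap_frobeniusSubalgebra {d : ℕ} {𝔠 : Ideal R} (h : QuotDimLT d 𝔠) (e : ℕ) :
    QuotDimLT d (𝔠.comap (frobeniusSubalgebra k R p e).val) := by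
  intro P hP
  let φ := toFrobeniusSubalgebra k p e 0 (R := R)
  have φ_coe (x : frobeniusSubalgebra k R p e) : φ x = x ^ p ^ e := Subtype.ext rfl
  have pow_pos : 0 < p ^ e := pow_pos (Fact.out : p.Prime).pos _
  have strictMono : StrictMono (PrimeSpectrum.comap φ) := by
    refine fun P Q hPQ => lt_of_le_of_ne (Ideal.comap_mono hPQ.le) fun heq => hPQ.not_ge ?_
    intro x hx
    have hmem : (x : R) ∈ (PrimeSpectrum.comap φ Q).asIdeal := by
      rw [PrimeSpectrum.comap_asIdeal, Ideal.mem_comap, φ_coe]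
      exact Ideal.pow_mem_of_mem _ hx _ pow_pos
    rw [← heq, PrimeSpectrum.comap_asIdeal, Ideal.mem_comap, φ_coe] at hmem
    exact P.2.mem_of_pow_mem _ hmem
  refine (Order.coheight_le_coheight_apply_of_strictMono _ strictMono P).trans_lt
    (h _ fun x hx => hP ?_)
  exact Ideal.pow_mem_of_mem 𝔠 hx _ pow_pos

instance (e : ℕ) : Algebra.IsIntegral (frobeniusSubalgebra k R p e) R := by
  refine ⟨fun x => IsIntegral.of_pow (pow_pos (Fact.out : p.Prime).pos e) ?_⟩
  exact isIntegral_algebraMap (R := frobeniusSubalgebra k R p e)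
    (x := ⟨x ^ p ^ e, pow_mem_frobeniusSubalgebra k p e 0 x⟩)

variable [Algebra.FiniteType k R]

instance (e : ℕ) : Module.Finite (frobeniusSubalgebra k R p e) R := by
  have : Algebra.FiniteType (frobeniusSubalgebra k R p e) R :=
    Algebra.FiniteType.of_restrictScalars_finiteType k _ _
  exact Algebra.IsIntegral.finite

variable {𝒜 : ℤ → Submodule k R} {I : Ideal R}
  {M : Type*} [AddCommGroup M] [Module R M]

instance [Module k M] {ℳ : ℤ → Submodule k M} [SetLike.GradedSMul 𝒜 ℳ] (C : Subalgebra k R) :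
    SetLike.GradedSMul (subalgebraGrading 𝒜 C) ℳ :=
  ⟨fun i j r x (hr : (r : R) ∈ 𝒜 i) hx =>
    (SetLike.GradedSMul.smul_mem hr hx : (r : R) • x ∈ ℳ (i +ᵥ j))⟩

lemma IsGradedDatum.isNoetherian_frobeniusSubalgebra [GradedAlgebra 𝒜] (h : IsGradedDatum 𝒜 I)
    [Module.Finite R M] (e : ℕ) : IsNoetherian (frobeniusSubalgebra k R p e) M := by
  have := (h.frobeniusIdealSystem p e).isNoetherianRing
  have : Module.Finite (frobeniusSubalgebra k R p e) M := Module.Finite.trans R M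
  exact isNoetherian_of_isNoetherianRing_of_finite _ _

end FrobeniusModule

section FrobeniusHilbertSumAsymptotics

variable {k R : Type*} [Field k] [CommRing R] [Algebra k R] {p : ℕ} [hp : Fact p.Prime]

local notation "ρ" => Submodule.restrictScalars k

omit hp in
lemma IsNegligible.of_shift {q d : ℕ} (hq : 0 < q) {f : ℕ → ℂ} (e : ℕ)
    (h : IsNegligible (fun n => q ^ n) d fun n => f (e + n)) :
    IsNegligible (fun n => q ^ n) d f := by
  set g : ℕ → ℝ := fun n => ((q ^ n : ℕ) : ℝ) ^ d / ((q ^ n : ℕ) : ℝ)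
  have g_ne_zero : ∀ n, g n ≠ 0 := fun n => by positivity
  have g_add : ∀ n, g n = (g e)⁻¹ * g (n + e) := fun n => by
    simp only [g, pow_add]
    push_cast
    rw [mul_pow]
    field_simp
  have hshift : (f ∘ (· + e)) =O[atTop] g := (h.mono le_top).congr_left fun n => by
    rw [add_comm, Function.comp]
  have hg : g =O[atTop] (g ∘ (· + e)) := by
    refine (Asymptotics.isBigO_const_mul_self (g e)⁻¹ (g ∘ (· + e)) _).congr_left fun n => ?_
    exact (g_add n).symm
  refine Asymptotics.IsBigO.nat_of_atTop ?_
    (Eventually.of_forall fun n hn => absurd hn (g_ne_zero n))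
  rw [← map_add_atTop_eq_nat e, Asymptotics.isBigO_map]
  exact hshift.trans hg

variable [CharP R p] [Algebra.FiniteType k R] {𝒜 : ℤ → Submodule k R} [GradedAlgebra 𝒜]
  {I : Ideal R} (h : IsGradedDatum 𝒜 I) (y : ℂ) {d : ℕ}

include h

lemma isNegligible_frobeniusHilbertSum {𝔠 : Ideal R} (h𝔠 : 𝔠.IsHomogeneous 𝒜)
    (hdim : QuotDimLT d 𝔠) (e : ℕ) :
    IsNegligible (fun n => p ^ n) d (frobeniusHilbertSum p I 𝒜 y (ρ 𝔠)
      (Subalgebra.toSubmodule (frobeniusSubalgebra k R p e))) := by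
  refine IsNegligible.of_shift hp.out.pos e ((isNegligible_hilbertSum (h.frobeniusIdealSystem p e)
    (y / (p : ℂ) ^ e) (isHomogeneous_comap_subalgebra 𝒜 h𝔠) isHomogeneous_top ⟨{1}, by simp⟩
    (hdim.comap_frobeniusSubalgebra e) fun b hb x _ => Ideal.mul_mem_right x _ hb).congr_left
    fun n => ?_)
  exact hilbertSum_comap_frobeniusSubalgebra h y e n 𝔠

theorem isNegligible_frobeniusHilbertSum_sub_sub {M : Type*} [AddCommGroup M] [Module R M]
    [Module k M] [IsScalarTower k R M] [Module.Finite R M] {ℳ : ℤ → Submodule k M}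
    [DirectSum.Decomposition ℳ] [SetLike.GradedSMul 𝒜 ℳ] {e : ℕ} {𝔠 : Ideal R}
    (hdim : QuotDimLT (d + 1) 𝔠)
    (hr : (𝔠.comap (frobeniusSubalgebra k R p e).val).IsRadical) {U N X : Submodule R M}
    (hU : U.IsHomogeneous ℳ) (hN : N.IsHomogeneous ℳ) (hX : X.IsHomogeneous ℳ) (hUN : U ≤ N)
    (hNX : N ≤ X) (h𝔠 : ∀ c ∈ 𝔠, ∀ x ∈ X, c • x ∈ U) :
    IsNegligible (fun n => p ^ n) d fun m =>
      frobeniusHilbertSum p I ℳ y (ρ U) (ρ X) m - frobeniusHilbertSum p I ℳ y (ρ U) (ρ N) m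
        - frobeniusHilbertSum p I ℳ y (ρ N) (ρ X) m := by
  have := h.isNoetherian_frobeniusSubalgebra (p := p) (M := M) e
  let C := frobeniusSubalgebra k R p e
  have hadd := isNegligible_hilbertSum_sub_sub (h.frobeniusIdealSystem p e) (y / (p : ℂ) ^ e)
    (hdim.comap_frobeniusSubalgebra e) hr (U := U.restrictScalars C) (N := N.restrictScalars C)
    (X := X.restrictScalars C) hU hN hX hUN hNX fun c hc x hx => h𝔠 c hc x hx
  refine IsNegligible.of_shift hp.out.pos e (hadd.congr_left fun n => ?_)
  simp only [hilbertSum_frobeniusIdealSystem]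
  rfl

theorem exists_isNegligible_frobeniusHilbertSum_sub_mul {e : ℕ} {P : Ideal R} [P.IsPrime]
    (hP : P.IsHomogeneous 𝒜) (hdim : QuotDimLT (d + 1) P)
    {X : Submodule (frobeniusSubalgebra k R p e) R} (hX : X.IsHomogeneous 𝒜) :
    ∃ r : ℕ, IsNegligible (fun n => p ^ n) d fun m => frobeniusHilbertSum p I 𝒜 y (ρ P) (ρ X) m -
      r * frobeniusHilbertSum p I 𝒜 y (ρ P)
        (Subalgebra.toSubmodule (frobeniusSubalgebra k R p e)) m := by
  have := h.isNoetherian_frobeniusSubalgebra (p := p) (M := R) e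
  let C := frobeniusSubalgebra k R p e
  have : (P.comap C.val).IsPrime := Ideal.comap_isPrime _ _
  obtain ⟨r, hr⟩ := exists_isNegligible_hilbertSum_sub_mul (h.frobeniusIdealSystem p e)
    (y / (p : ℂ) ^ e) (hdim.comap_frobeniusSubalgebra e) (U := P.restrictScalars C ⊓ X) (X := X)
    (fun j x hx => ⟨hP j hx.1, hX j hx.2⟩) hX inf_le_right
    fun b hb x hx => ⟨P.mul_mem_right _ hb, X.smul_mem _ hx⟩
  refine ⟨r, IsNegligible.of_shift hp.out.pos e (hr.congr_left fun n => ?_)⟩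
  rw [hilbertSum_comap_frobeniusSubalgebra, hilbertSum_frobeniusIdealSystem]
  congr 1
  refine weightedSum_congr _ fun x hx => ?_
  have hXle : bracketSMul p I (e + n) (ρ X) ≤ ρ X := by
    rw [← restrictScalars_map_toFrobeniusSubalgebra_smul]
    exact Submodule.smul_le_right (N := X)
  rw [Submodule.restrictScalars_inf, sup_comm, ← sup_inf_assoc_of_le _ hXle, sup_comm]
  exact ⟨fun hx => hx.1, fun hxP => ⟨hxP, hx⟩⟩

end FrobeniusHilbertSumAsymptotics

/-! ### Frobenius invariance of the sums -/

section FrobeniusInvariance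

open scoped Pointwise

variable {k R : Type*} [Field k] [CommRing R] [Algebra k R] {p : ℕ}

local notation "ρ" => Submodule.restrictScalars k

variable [hp : Fact p.Prime]

lemma PowLinearIndependent.eq_zero_of_isNilpotent {C : Subalgebra k R}
    (hC : PowLinearIndependent p (Subalgebra.toSubmodule C)) {x : R} (hx : x ∈ C)
    (hnil : IsNilpotent x) : x = 0 := by
  have eq_zero_of_pow : ∀ z ∈ C, z ^ p = 0 → z = 0 := fun z hz hzp => by
    by_contra hne
    exact (hC {z} (Set.singleton_subset_iff.2 hz) (LinearIndepOn.singleton (by simpa))).ne_zero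
      (Set.mem_singleton z) hzp
  obtain ⟨n, hn⟩ := hnil
  have hpow : x ^ p ^ n = 0 := pow_eq_zero_of_le (Nat.lt_pow_self hp.out.one_lt).le hn
  clear hn
  induction n with
  | zero => simpa using hpow
  | succ n ih =>
    exact ih (eq_zero_of_pow _ (C.pow_mem hx _) (by rwa [← pow_mul, ← pow_succ]))

lemma isRadical_comap_frobeniusSubalgebra {𝔠 : Ideal R} {e : ℕ} (h : PowLinearIndependent p
    (Subalgebra.toSubmodule (frobeniusSubalgebra k (R ⧸ 𝔠) p e))) :
    (𝔠.comap (frobeniusSubalgebra k R p e).val).IsRadical := by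
  rintro x ⟨n, hn⟩
  have hmem := map_frobeniusSubalgebra_le p (Ideal.Quotient.mkₐ k 𝔠) e ⟨x, x.2, rfl⟩
  have hzero := h.eq_zero_of_isNilpotent hmem
    ⟨n, (map_pow _ _ _).symm.trans (Ideal.Quotient.eq_zero_iff_mem.2 hn)⟩
  exact (Ideal.Quotient.eq_zero_iff_mem (I := 𝔠)).1 hzero

variable [CharP R p]

lemma powSpan_frobeniusSubalgebra (e : ℕ) :
    powSpan p (Subalgebra.toSubmodule (frobeniusSubalgebra k R p e)) =
      Subalgebra.toSubmodule (frobeniusSubalgebra k R p (e + 1)) := by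
  simp only [toSubmodule_frobeniusSubalgebra, powSpan_span, ← Set.range_comp, Function.comp_def,
    ← pow_mul, ← pow_succ]

lemma powSpan_bracketSMul (I : Ideal R) (m : ℕ) (X : Submodule k R) :
    powSpan p (bracketSMul p I m X) = bracketSMul p I (m + 1) (powSpan p X) := by
  have himage : ((· ^ p ^ (m + 1)) '' (I : Set R)) = (· ^ p) '' ((· ^ p ^ m) '' (I : Set R)) := by
    simp only [Set.image_image, ← pow_mul, ← pow_succ]
  rw [bracketSMul, bracketSMul, himage, ← Submodule.span_eq X, ← Submodule.span_set_smul,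
    powSpan_span, powSpan_span, ← Submodule.span_set_smul]
  congr 1
  exact Set.image_mul (powMonoidHom p)

variable {𝒜 : ℤ → Submodule k R} [GradedAlgebra 𝒜]

lemma decompose_mem_powSpan {X : Submodule k R} (hX : X.IsHomogeneous 𝒜) {z : R}
    (hz : z ∈ powSpan p X) (j : ℤ) :
    (DirectSum.decompose 𝒜 z j : R) ∈ ⨆ i, ⨆ _ : (p : ℤ) * i = j, powSpan p (X ⊓ 𝒜 i) := by
  classical
  induction hz using Submodule.span_induction with
  | mem w hw =>
    obtain ⟨x, hx, rfl⟩ := hw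
    have hpiece (i : ℤ) : (DirectSum.decompose 𝒜 x i : R) ^ p ∈ 𝒜 (p * i) := by
      simpa using SetLike.pow_mem_graded p (SetLike.coe_mem (DirectSum.decompose 𝒜 x i))
    beta_reduce
    rw [← DirectSum.sum_support_decompose 𝒜 x, sum_pow_char, DirectSum.decompose_sum,
      DFinsupp.finsetSum_apply, AddSubmonoidClass.coe_finsetSum]
    refine Submodule.sum_mem _ fun i _ => ?_
    by_cases hij : (p : ℤ) * i = j
    · subst hij
      rw [DirectSum.decompose_of_mem_same _ (hpiece i)]
      exact Submodule.mem_iSup_of_mem i (Submodule.mem_iSup_of_mem rfl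
        (pow_mem_powSpan ⟨hX i hx, SetLike.coe_mem _⟩))
    · rw [DirectSum.decompose_of_mem_ne _ (hpiece i) hij]
      exact Submodule.zero_mem _
  | zero => simp
  | add a b _ _ ha hb => rw [DirectSum.decompose_add]; exact Submodule.add_mem _ ha hb
  | smul c a _ ha => rw [DirectSum.decompose_smul]; exact Submodule.smul_mem _ _ ha

lemma powSpan_inf_piece {X : Submodule k R} (hX : X.IsHomogeneous 𝒜) (j : ℤ) :
    powSpan p X ⊓ 𝒜 j = ⨆ i, ⨆ _ : (p : ℤ) * i = j, powSpan p (X ⊓ 𝒜 i) := by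
  refine le_antisymm (fun z hz => ?_) (iSup₂_le ?_)
  · simpa only [DirectSum.decompose_of_mem_same _ hz.2] using decompose_mem_powSpan hX hz.1 j
  · rintro i rfl
    refine le_inf (powSpan_mono inf_le_left) (Submodule.span_le.2 ?_)
    rintro _ ⟨x, hx, rfl⟩
    simpa using SetLike.pow_mem_graded p hx.2

lemma weightedSum_powSpan {D : Type*} [CommRing D] [Algebra k D] [CharP D p] (f : R →ₐ[k] D)
    {V : Submodule k D} (hV : PowLinearIndependent p V) {W X : Submodule k R}
    (hX : X.IsHomogeneous 𝒜) (hWV : W.map f.toLinearMap ≤ V) (hXV : X.map f.toLinearMap ≤ V)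
    (w : ℤ → ℂ) :
    weightedSum 𝒜 w (LinearMap.ker f.toLinearMap ⊔ powSpan p W) (powSpan p X) =
      weightedSum 𝒜 (fun i => w (p * i)) (LinearMap.ker f.toLinearMap ⊔ W) X := by
  have hp0 : (p : ℤ) ≠ 0 := mod_cast hp.out.ne_zero
  unfold weightedSum
  rw [← (mul_right_injective₀ hp0).tsum_eq]
  · refine tsum_congr fun i => ?_
    have hpiece : powSpan p X ⊓ 𝒜 (p * i) = powSpan p (X ⊓ 𝒜 i) := by
      simp [powSpan_inf_piece hX, hp.out.ne_zero]
    rw [hpiece, ← relLength_map_map, ← relLength_map_map, map_powSpan, map_powSpan,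
      relLength_powSpan hV hWV ((Submodule.map_mono inf_le_left).trans hXV)]
  · intro j hj
    by_contra hrange
    refine hj ?_
    have hpiece : powSpan p X ⊓ 𝒜 j = ⊥ := by
      rw [powSpan_inf_piece hX]
      simp only [iSup_eq_bot]
      exact fun i hi => absurd ⟨i, hi⟩ hrange
    simp [hpiece, relLength_eq_zero_iff.2]

theorem frobeniusHilbertSum_succ {I : Ideal R} (y : ℂ) {P : Ideal R} [CharP (R ⧸ P) p] {e : ℕ}
    (h : PowLinearIndependent p (Subalgebra.toSubmodule (frobeniusSubalgebra k (R ⧸ P) p e)))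
    {m : ℕ} (hm : e ≤ m) :
    frobeniusHilbertSum p I 𝒜 y (ρ P)
        (Subalgebra.toSubmodule (frobeniusSubalgebra k R p (e + 1))) (m + 1) =
      frobeniusHilbertSum p I 𝒜 y (ρ P)
        (Subalgebra.toSubmodule (frobeniusSubalgebra k R p e)) m := by
  set C := frobeniusSubalgebra k R p e
  have hker : ρ P = LinearMap.ker (Ideal.Quotient.mkₐ k P).toLinearMap :=
    Submodule.ext fun _ => Ideal.Quotient.eq_zero_iff_mem.symm
  have hCV : (Subalgebra.toSubmodule C).map (Ideal.Quotient.mkₐ k P).toLinearMap ≤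
      Subalgebra.toSubmodule (frobeniusSubalgebra k (R ⧸ P) p e) :=
    map_frobeniusSubalgebra_le p (Ideal.Quotient.mkₐ k P) e
  have hle : bracketSMul p I m (Subalgebra.toSubmodule C) ≤ Subalgebra.toSubmodule C := by
    obtain ⟨n, rfl⟩ := Nat.exists_eq_add_of_le hm
    refine Submodule.set_smul_le _ _ _ ?_
    rintro _ v ⟨x, -, rfl⟩ hv
    exact C.mul_mem (pow_mem_frobeniusSubalgebra k p e n x) hv
  have hweight : (fun i => weight y (p ^ (m + 1)) (p * i)) = weight y (p ^ m) := by
    have : (p : ℂ) ≠ 0 := mod_cast hp.out.ne_zero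
    ext i
    unfold weight
    congr 1
    push_cast
    rw [pow_succ]
    field_simp
  rw [frobeniusHilbertSum, ← powSpan_frobeniusSubalgebra, ← powSpan_bracketSMul, hker,
    weightedSum_powSpan _ h (isHomogeneous_frobeniusSubalgebra k e)
      ((Submodule.map_mono hle).trans hCV) hCV, hweight, frobeniusHilbertSum]

end FrobeniusInvariance

/-! ### Approximate recursions and convergence -/

section ApproximateRecursion

variable {V : Type*} [NormedAddCommGroup V] [NormedSpace ℝ V] {u : ℕ → V} {r q K : ℝ}

lemma tendsto_zero_of_norm_sub_smul_le (hr : 0 ≤ r) (hr1 : r < 1) (hq : 0 ≤ q) (hq1 : q < 1)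
    (h : ∀ m, ‖u (m + 1) - r • u m‖ ≤ K * q ^ m) : Tendsto u atTop (nhds 0) := by
  obtain ⟨s, hs, hs1⟩ := exists_between (max_lt hr1 hq1)
  have hrs : r < s := (le_max_left r q).trans_lt hs
  have hqs : q < s := (le_max_right r q).trans_lt hs
  have hs0 : 0 < s := hr.trans_lt hrs
  have hK : 0 ≤ K := (norm_nonneg _).trans ((h 0).trans_eq (by simp))
  set C := max ‖u 0‖ (K / (s - r))
  have hKC : K ≤ C * (s - r) := (div_le_iff₀ (sub_pos.2 hrs)).1 (le_max_right _ _)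
  have bound : ∀ m, ‖u m‖ ≤ C * s ^ m := by
    intro m
    induction m with
    | zero => simp [C]
    | succ m ih =>
      calc ‖u (m + 1)‖ ≤ ‖u (m + 1) - r • u m‖ + ‖r • u m‖ := norm_le_norm_sub_add _ _
        _ ≤ K * s ^ m + r * (C * s ^ m) := by
          rw [norm_smul, Real.norm_of_nonneg hr]
          gcongr
          exact (h m).trans (by gcongr)
        _ ≤ C * (s - r) * s ^ m + r * (C * s ^ m) := by gcongr
        _ = C * s ^ (m + 1) := by ring
  refine squeeze_zero_norm bound ?_
  simpa using (tendsto_pow_atTop_nhds_zero_of_lt_one hs0.le hs1).const_mul C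

/-- A deviation from `0` would be amplified geometrically. -/
lemma tendsto_zero_of_norm_sub_smul_le_of_bounded (hr : 1 < r) (hq : 0 ≤ q) (hq1 : q < 1) {C : ℝ}
    (hC : ∀ m, ‖u m‖ ≤ C) (h : ∀ m, ‖u (m + 1) - r • u m‖ ≤ K * q ^ m) :
    Tendsto u atTop (nhds 0) := by
  have hr0 : 0 < r := one_pos.trans hr
  have hr1 : 0 < r - 1 := sub_pos.2 hr
  have hK : 0 ≤ K := (norm_nonneg _).trans ((h 0).trans_eq (by simp))
  have bound : ∀ j m, ‖u m‖ ≤ C * r⁻¹ ^ j + K * q ^ m / (r - 1) := by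
    intro j
    induction j with
    | zero => exact fun m => by simpa using (hC m).trans (le_add_of_nonneg_right (by positivity))
    | succ j ih =>
      intro m
      have hstep : r * ‖u m‖ ≤ K * q ^ m + (C * r⁻¹ ^ j + K * q ^ m / (r - 1)) :=
        calc r * ‖u m‖ = ‖r • u m‖ := by rw [norm_smul, Real.norm_of_nonneg hr0.le]
          _ ≤ ‖u (m + 1) - r • u m‖ + ‖u (m + 1)‖ := by
            rw [norm_sub_rev]; exact norm_le_norm_sub_add _ _
          _ ≤ K * q ^ m + (C * r⁻¹ ^ j + K * q ^ (m + 1) / (r - 1)) := add_le_add (h m) (ih _)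
          _ ≤ _ := by
            gcongr _ + (_ + K * ?_ / _)
            exact pow_le_pow_of_le_one hq hq1.le m.le_succ
      rw [← mul_le_mul_iff_right₀ hr0]
      refine hstep.trans_eq ?_
      rw [pow_succ]
      field_simp
      ring
  refine squeeze_zero_norm (a := fun m => K * q ^ m / (r - 1)) (fun m => ?_) ?_
  · have hlim := (tendsto_pow_atTop_nhds_zero_of_lt_one (inv_nonneg.2 hr0.le)
      (inv_lt_one_of_one_lt₀ hr)).const_mul C |>.add_const (K * q ^ m / (r - 1))
    rw [mul_zero, zero_add] at hlim
    exact ge_of_tendsto' hlim fun j => bound j m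
  · simpa using ((tendsto_pow_atTop_nhds_zero_of_lt_one hq hq1).const_mul K).div_const (r - 1)

theorem exists_tendsto_of_norm_sub_smul_le [CompleteSpace V] (hr : 0 ≤ r) (hq : 0 ≤ q) (hq1 : q < 1)
    {C : ℝ} (hC : ∀ m, ‖u m‖ ≤ C) (h : ∀ m, ‖u (m + 1) - r • u m‖ ≤ K * q ^ m) :
    ∃ L, Tendsto u atTop (nhds L) := by
  rcases lt_trichotomy r 1 with hr1 | rfl | hr1
  · exact ⟨0, tendsto_zero_of_norm_sub_smul_le hr hr1 hq hq1 h⟩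
  · refine cauchySeq_tendsto_of_complete (cauchySeq_of_le_geometric q K hq1 fun m => ?_)
    rw [dist_comm, dist_eq_norm]
    simpa using h m
  · exact ⟨0, tendsto_zero_of_norm_sub_smul_le_of_bounded hr1 hq hq1 hC h⟩

end ApproximateRecursion

section NegligibleLimits

variable {p d : ℕ} [hp : Fact p.Prime]

lemma IsNegligible.exists_norm_div_le {f : ℕ → ℂ} (hf : IsNegligible (fun n => p ^ n) d f) :
    ∃ K : ℝ, ∀ m, ‖f m / (p : ℂ) ^ (m * d)‖ ≤ K * (p : ℝ)⁻¹ ^ m := by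
  have hp0 : (0 : ℝ) < p := mod_cast hp.out.pos
  obtain ⟨K, hK⟩ := hf.bound
  refine ⟨K, fun m => ?_⟩
  have hm := eventually_top.1 hK m
  rw [Real.norm_of_nonneg (by positivity)] at hm
  rw [norm_div, norm_pow, norm_natCast, div_le_iff₀ (by positivity)]
  refine hm.trans_eq ?_
  push_cast
  rw [pow_mul, inv_pow]
  ring

lemma IsNegligible.tendsto_div {f : ℕ → ℂ} (hf : IsNegligible (fun n => p ^ n) d f) :
    Tendsto (fun m => f m / (p : ℂ) ^ (m * d)) atTop (nhds 0) := by
  obtain ⟨K, hK⟩ := hf.exists_norm_div_le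
  refine squeeze_zero_norm hK ?_
  have hp1 : (p : ℝ)⁻¹ < 1 := inv_lt_one_of_one_lt₀ (mod_cast hp.out.one_lt)
  simpa using (tendsto_pow_atTop_nhds_zero_of_lt_one (by positivity) hp1).const_mul K

lemma IsNegligible.exists_tendsto_div {a b : ℕ → ℂ} {e r : ℕ}
    (hb : ∀ m, e ≤ m → b (m + 1) = a m)
    (hab : IsNegligible (fun n => p ^ n) d fun m => a m - r * b m)
    (ha : IsNegligible (fun n => p ^ n) (d + 1) a) :
    ∃ L, Tendsto (fun m => a m / (p : ℂ) ^ (m * d)) atTop (nhds L) := by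
  have hp0 : (p : ℂ) ≠ 0 := mod_cast hp.out.ne_zero
  have hp1 : (p : ℝ)⁻¹ < 1 := inv_lt_one_of_one_lt₀ (mod_cast hp.out.one_lt)
  obtain ⟨C, hC⟩ := ha.exists_norm_div_le
  obtain ⟨K, hK⟩ := hab.exists_norm_div_le
  set u : ℕ → ℂ := fun m => a m / (p : ℂ) ^ (m * d)
  have u_bounded : ∀ m, ‖u m‖ ≤ C := by
    intro m
    have hm := hC m
    rwa [Nat.mul_succ, pow_add, ← div_div, norm_div, norm_pow, norm_natCast, inv_pow,
      ← div_eq_mul_inv, div_le_div_iff_of_pos_right (by have := hp.out.pos; positivity)] at hm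
  have u_succ : ∀ m, e ≤ m → ‖u (m + 1) - ((r : ℝ) / (p : ℝ) ^ d) • u m‖ ≤
      K * (p : ℝ)⁻¹ ^ (m + 1) := by
    intro m hm
    refine (congrArg norm ?_).trans_le (hK (m + 1))
    rw [hb m hm, real_smul]
    push_cast
    simp only [u, Nat.succ_mul, pow_add]
    field_simp
  suffices ∃ L, Tendsto (fun m => u (m + e)) atTop (nhds L) from
    this.imp fun L => (tendsto_add_atTop_iff_nat e).1
  refine exists_tendsto_of_norm_sub_smul_le (r := (r : ℝ) / (p : ℝ) ^ d) (q := (p : ℝ)⁻¹)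
    (K := K * (p : ℝ)⁻¹ ^ (e + 1)) (by positivity) (by positivity) hp1
    (fun m => u_bounded _) fun m => ?_
  rw [add_right_comm]
  exact (u_succ _ (Nat.le_add_left e m)).trans_eq (by ring)

end NegligibleLimits

section Convergence

variable {k R : Type*} [Field k] [CommRing R] [Algebra k R] {p : ℕ}

local notation "ρ" => Submodule.restrictScalars k

variable [CharP R p]

variable (k p) in
include k in
lemma charP_quotient (𝔠 : Ideal R) [Nontrivial (R ⧸ 𝔠)] : CharP (R ⧸ 𝔠) p := by
  have : Nontrivial R := (Ideal.Quotient.mk 𝔠).domain_nontrivial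
  exact (Algebra.charP_iff k (R ⧸ 𝔠) p).1 ((Algebra.charP_iff k R p).2 inferInstance)

variable [Fact p.Prime] [Algebra.FiniteType k R]

variable (k p) in
lemma exists_powLinearIndependent_frobeniusSubalgebra (R : Type*) [CommRing R] [Algebra k R]
    [Algebra.FiniteType k R] [Nontrivial R] [CharP R p] :
    ∃ e, PowLinearIndependent p (Subalgebra.toSubmodule (frobeniusSubalgebra k R p e)) := by
  have := (Algebra.charP_iff k R p).2 inferInstance
  simpa only [toSubmodule_frobeniusSubalgebra] using
    exists_powLinearIndependent_span_range_pow k R p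

variable {𝒜 : ℤ → Submodule k R} [GradedAlgebra 𝒜] {I : Ideal R} (h : IsGradedDatum 𝒜 I) (y : ℂ)
  {d : ℕ}

include h

theorem exists_tendsto_frobeniusHilbertSum_div {P : Ideal R} [P.IsPrime] (hP : P.IsHomogeneous 𝒜)
    (hdim : QuotDimLT (d + 1) P) :
    ∃ L, Tendsto (fun m => frobeniusHilbertSum p I 𝒜 y (ρ P) ⊤ m / (p : ℂ) ^ (m * d)) atTop
      (nhds L) := by
  have := charP_quotient k p P
  obtain ⟨e, he⟩ := exists_powLinearIndependent_frobeniusSubalgebra k p (R ⧸ P)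
  let B := fun e => Subalgebra.toSubmodule (frobeniusSubalgebra k R p e)
  let X : Submodule (frobeniusSubalgebra k R p (e + 1)) R :=
    { __ := B e
      smul_mem' := fun c x hx => (frobeniusSubalgebra k R p e).mul_mem
        (frobeniusSubalgebra_antitone k p e.le_succ c.2) hx }
  obtain ⟨r, hr⟩ := exists_isNegligible_frobeniusHilbertSum_sub_mul h y hP hdim (X := X)
    (isHomogeneous_frobeniusSubalgebra k e)
  obtain ⟨L, hL⟩ := IsNegligible.exists_tendsto_div
    (fun m hm => frobeniusHilbertSum_succ (𝒜 := 𝒜) (I := I) y he hm) hr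
    (isNegligible_frobeniusHilbertSum h y hP hdim e)
  obtain ⟨s, hs⟩ := exists_isNegligible_frobeniusHilbertSum_sub_mul h y hP hdim (e := e) (X := ⊤)
    isHomogeneous_top
  refine ⟨0 + s * L, (hs.tendsto_div.add (hL.const_mul (s : ℂ))).congr fun m => ?_⟩
  rw [sub_div, mul_div_assoc, sub_add_cancel]
  rfl

end Convergence

/-! ### Lengths of localizations -/

section LocalLength

variable {R M : Type*} [CommRing R] [AddCommGroup M] [Module R M] (P : Ideal R) [P.IsPrime]

variable (M) in
/-- The length `λ_{R_P}(M_P)` of the localization of `M` at `P`. -/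
def localLength : ℕ∞ := Module.length (Localization.AtPrime P) (LocalizedModule P.primeCompl M)

variable {P} in
lemma localLength_eq_zero {s : R} (hs : s ∉ P) (h : ∀ x : M, s • x = 0) : localLength M P = 0 := by
  rw [localLength, Module.length_eq_zero_iff, LocalizedModule.subsingleton_iff]
  exact fun x => ⟨s, hs, h x⟩

lemma localLength_eq_add_of_exact {N Q : Type*} [AddCommGroup N] [Module R N] [AddCommGroup Q]
    [Module R Q] {f : N →ₗ[R] M} {g : M →ₗ[R] Q} (hf : Function.Injective f)
    (hg : Function.Surjective g) (H : Function.Exact f g) :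
    localLength M P = localLength N P + localLength Q P :=
  Module.length_eq_add_of_exact (LocalizedModule.map P.primeCompl f)
    (LocalizedModule.map P.primeCompl g) (LocalizedModule.map_injective _ f hf)
    (LocalizedModule.map_surjective _ g hg) (LocalizedModule.map_exact _ f g H)

lemma localLength_congr {N : Type*} [AddCommGroup N] [Module R N] (e : M ≃ₗ[R] N) :
    localLength M P = localLength N P := by
  have hzero : localLength PUnit.{1} P = 0 :=
    localLength_eq_zero (P.ne_top_iff_one.1 Ideal.IsPrime.ne_top') fun _ => rfl
  rw [localLength_eq_add_of_exact P e.injective (g := (0 : N →ₗ[R] PUnit.{1})) (fun _ => ⟨0, rfl⟩)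
    ((LinearMap.exact_zero_iff_surjective _ _).2 e.surjective), hzero, add_zero]

lemma localLength_quotient_self : localLength (R ⧸ P) P = 1 := by
  have hsubmonoid : Algebra.algebraMapSubmonoid (R ⧸ P) P.primeCompl = nonZeroDivisors (R ⧸ P) := by
    ext x
    obtain ⟨r, rfl⟩ := Ideal.Quotient.mk_surjective x
    rw [mem_nonZeroDivisors_iff_ne_zero, Ne, Ideal.Quotient.eq_zero_iff_mem]
    refine ⟨?_, fun hr => ⟨r, hr, rfl⟩⟩
    rintro ⟨s, hs, hsr⟩ hr
    exact hs (Ideal.Quotient.eq_zero_iff_mem.1 (hsr.trans (Ideal.Quotient.eq_zero_iff_mem.2 hr)))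
  have : IsLocalization (Algebra.algebraMapSubmonoid (R ⧸ P) P.primeCompl) P.ResidueField := by
    rw [hsubmonoid]; infer_instance
  have e := ((IsLocalizedModule.iso P.primeCompl
    (IsScalarTower.toAlgHom R (R ⧸ P) P.ResidueField).toLinearMap).extendScalarsOfIsLocalization
      P.primeCompl (Localization.AtPrime P))
  rw [localLength, e.length_eq, Module.length_eq_of_surjective (R := P.ResidueField)
    IsLocalRing.residue_surjective]
  exact Module.length_eq_one _ _

variable {P} in
lemma localLength_quotient_eq_zero {Q : Ideal R} (h : ¬ Q ≤ P) : localLength (R ⧸ Q) P = 0 := by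
  obtain ⟨s, hsQ, hsP⟩ := SetLike.not_le_iff_exists.1 h
  refine localLength_eq_zero hsP fun x => ?_
  obtain ⟨r, rfl⟩ := Ideal.Quotient.mk_surjective x
  exact Ideal.Quotient.eq_zero_iff_mem.2 (Q.mul_mem_right r hsQ)

lemma localLength_sup_span_singleton (N : Submodule R M) (z : M) :
    localLength ↥(N ⊔ R ∙ z) P = localLength N P + localLength (R ⧸ N.colon {z}) P := by
  let f : N →ₗ[R] ↥(N ⊔ R ∙ z) := Submodule.inclusion le_sup_left
  let x : ↥(N ⊔ R ∙ z) := ⟨z, Submodule.mem_sup_right (Submodule.mem_span_singleton_self z)⟩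
  let φ : R →ₗ[R] ↥(N ⊔ R ∙ z) ⧸ LinearMap.range f :=
    LinearMap.toSpanSingleton R _ ((LinearMap.range f).mkQ x)
  have mem_range (w : ↥(N ⊔ R ∙ z)) : w ∈ LinearMap.range f ↔ (w : M) ∈ N :=
    ⟨by rintro ⟨v, rfl⟩; exact v.2, fun hw => ⟨⟨w, hw⟩, rfl⟩⟩
  have hker : LinearMap.ker φ = N.colon {z} := by
    ext r
    rw [LinearMap.mem_ker, LinearMap.toSpanSingleton_apply, ← map_smul, Submodule.mkQ_apply,
      Submodule.Quotient.mk_eq_zero, mem_range, Submodule.mem_colon_singleton]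
    rfl
  have hsurj : Function.Surjective φ := by
    intro w
    obtain ⟨⟨v, hv⟩, rfl⟩ := Submodule.mkQ_surjective _ w
    obtain ⟨n, hn, _, hz, rfl⟩ := Submodule.mem_sup.1 hv
    obtain ⟨r, rfl⟩ := Submodule.mem_span_singleton.1 hz
    refine ⟨r, ?_⟩
    rw [LinearMap.toSpanSingleton_apply, ← map_smul, Submodule.mkQ_apply, Submodule.mkQ_apply,
      Submodule.Quotient.eq, mem_range]
    simpa [x] using hn
  rw [localLength_eq_add_of_exact P (Submodule.inclusion_injective _) (Submodule.mkQ_surjective _)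
    (LinearMap.exact_map_mkQ_range f), ← localLength_congr P (φ.quotKerEquivOfSurjective hsurj),
    hker]

end LocalLength

section TopDimensionalPrimes

variable {R : Type*} [CommRing R] {d : ℕ} {𝔠 : Ideal R}

lemma ringKrullDim_quotient_eq_coheight (P : PrimeSpectrum R) :
    ringKrullDim (R ⧸ P.asIdeal) = (Order.coheight P : ℕ∞) := by
  rw [ringKrullDim_quotient, Order.coheight_eq_krullDim_Ici]
  congr!

lemma QuotDimLT.of_ringKrullDim_lt (h : ringKrullDim (R ⧸ 𝔠) < d) : QuotDimLT d 𝔠 := by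
  intro P hP
  have hle : ringKrullDim (R ⧸ P.asIdeal) ≤ ringKrullDim (R ⧸ 𝔠) :=
    ringKrullDim_le_of_surjective (Ideal.Quotient.factor hP) (Ideal.Quotient.factor_surjective hP)
  rw [ringKrullDim_quotient_eq_coheight] at hle
  exact_mod_cast hle.trans_lt h

variable (d 𝔠) in
/-- The minimal primes `P` over `𝔠` with `dim R/P = d`. -/
def topDimPrimes : Set (PrimeSpectrum R) :=
  {P | P.asIdeal ∈ 𝔠.minimalPrimes ∧ ringKrullDim (R ⧸ P.asIdeal) = d}

instance [IsNoetherianRing R] : Finite (topDimPrimes d 𝔠) :=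
  ((Ideal.finite_minimalPrimes_of_isNoetherianRing R 𝔠).preimage
    fun _ _ _ _ => PrimeSpectrum.ext).subset fun _ hP => hP.1

lemma coheight_of_mem_topDimPrimes {P : PrimeSpectrum R} (hP : P ∈ topDimPrimes d 𝔠) :
    Order.coheight P = d := by
  have h := hP.2
  rw [ringKrullDim_quotient_eq_coheight] at h
  exact_mod_cast h

lemma QuotDimLT.mem_topDimPrimes (h : QuotDimLT (d + 1) 𝔠) {Q : PrimeSpectrum R}
    (hQ : 𝔠 ≤ Q.asIdeal) (hlt : ¬ QuotDimLT d Q.asIdeal) : Q ∈ topDimPrimes d 𝔠 := by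
  have coheight_le {P : PrimeSpectrum R} (hP : 𝔠 ≤ P.asIdeal) : Order.coheight P ≤ d :=
    Order.le_of_lt_add_one (h P hP)
  have coheight_eq : Order.coheight Q = d :=
    (coheight_le hQ).antisymm <| not_lt.1 fun hQd =>
      hlt fun P hP => (Order.coheight_anti (show Q ≤ P from hP)).trans_lt hQd
  refine ⟨⟨⟨Q.2, hQ⟩, fun P' ⟨hP', h𝔠P'⟩ hle => ?_⟩, ?_⟩
  · by_contra hnle
    have hlt : (⟨P', hP'⟩ : PrimeSpectrum R) < Q := lt_of_le_not_ge hle hnle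
    have := Order.coheight_strictAnti hlt (by rw [coheight_eq]; exact ENat.natCast_lt_top d)
    exact (coheight_eq ▸ this).not_ge (coheight_le h𝔠P')
  · rw [ringKrullDim_quotient_eq_coheight, coheight_eq]
    rfl

end TopDimensionalPrimes

/-! ### The localization formula -/

section HomogeneousPrimes

variable {k R M : Type*} [Field k] [CommRing R] [Algebra k R]
  [AddCommGroup M] [Module R M] [Module k M]
  {𝒜 : ℤ → Submodule k R} [GradedAlgebra 𝒜]

lemma isHomogeneous_annihilator (ℳ : ℤ → Submodule k M) [DirectSum.Decomposition ℳ]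
    [SetLike.GradedSMul 𝒜 ℳ] : (Module.annihilator R M).IsHomogeneous 𝒜 := by
  classical
  intro i r hr
  rw [Module.mem_annihilator] at hr ⊢
  intro x
  rw [← DirectSum.sum_support_decompose ℳ x, Finset.smul_sum]
  refine Finset.sum_eq_zero fun t _ => ?_
  rw [← decompose_smul_add 𝒜 (SetLike.coe_mem (DirectSum.decompose ℳ x t)), hr,
    DirectSum.decompose_zero, DirectSum.zero_apply, ZeroMemClass.coe_zero]

lemma isHomogeneous_of_mem_minimalPrimes {𝔠 P : Ideal R} (h𝔠 : 𝔠.IsHomogeneous 𝒜)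
    (hP : P ∈ 𝔠.minimalPrimes) : P.IsHomogeneous 𝒜 := by
  have : P.IsPrime := hP.1.1
  have hle : (P.homogeneousCore 𝒜).toIdeal ≤ P := Ideal.toIdeal_homogeneousCore_le 𝒜 P
  have h𝔠le : 𝔠 ≤ (P.homogeneousCore 𝒜).toIdeal := by
    rw [← h𝔠.toIdeal_homogeneousCore_eq_self]
    exact Ideal.homogeneousCore_mono 𝒜 hP.1.2
  rw [(hP.2 ⟨Ideal.IsPrime.homogeneousCore this, h𝔠le⟩ hle).antisymm hle]
  exact (P.homogeneousCore 𝒜).isHomogeneous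

end HomogeneousPrimes

lemma tendsto_weight_pow {p : ℕ} (hp : 1 < p) (y : ℂ) (t : ℤ) :
    Tendsto (fun m => weight y (p ^ m) t) atTop (nhds 1) := by
  rw [tendsto_iff_norm_sub_tendsto_zero]
  refine squeeze_zero (fun _ => norm_nonneg _)
    (fun m => norm_weight_sub_one_le y (pow_pos (zero_lt_one.trans hp) m) t) ?_
  push_cast
  exact tendsto_const_nhds.div_atTop (tendsto_pow_atTop_atTop_of_one_lt (mod_cast hp))

section LocalizationSum

variable {R M N Q : Type*} [CommRing R] [AddCommGroup M] [Module R M] [AddCommGroup N] [Module R N]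
  [AddCommGroup Q] [Module R Q] {d : ℕ} {𝔠 : Ideal R} {ℓ : topDimPrimes d 𝔠 → ℂ} {f g u : ℕ → ℂ}

variable (M ℓ f) in
/-- The sequence `f` converges to `∑ λ(M_P) ℓ(P)`, the sum being over the minimal primes `P` over
`𝔠` of dimension `d`, and all the lengths `λ(M_P)` are finite. -/
def TendsToLocalizationSum : Prop :=
  ∃ c : topDimPrimes d 𝔠 → ℕ, (∀ P, localLength M P.1.asIdeal = c P) ∧
    Tendsto f atTop (nhds (∑' P, (c P : ℂ) * ℓ P))

lemma TendsToLocalizationSum.of_localLength_eq (h : TendsToLocalizationSum M ℓ f)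
    (hMN : ∀ P : topDimPrimes d 𝔠, localLength N P.1.asIdeal = localLength M P.1.asIdeal) :
    TendsToLocalizationSum N ℓ f :=
  let ⟨c, hc, hf⟩ := h
  ⟨c, fun P => (hMN P).trans (hc P), hf⟩

lemma tendsToLocalizationSum_zero
    (hM : ∀ P : topDimPrimes d 𝔠, localLength M P.1.asIdeal = 0) (hf : Tendsto f atTop (nhds 0)) :
    TendsToLocalizationSum M ℓ f :=
  ⟨0, hM, by simpa using hf⟩

lemma TendsToLocalizationSum.add [IsNoetherianRing R] {w : ℕ → ℂ}
    (hf : TendsToLocalizationSum N ℓ f) (hg : TendsToLocalizationSum Q ℓ g)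
    (hw : Tendsto w atTop (nhds 1))
    (hlength : ∀ P : topDimPrimes d 𝔠,
      localLength M P.1.asIdeal = localLength N P.1.asIdeal + localLength Q P.1.asIdeal)
    (hu : Tendsto (fun m => u m - f m - w m * g m) atTop (nhds 0)) :
    TendsToLocalizationSum M ℓ u := by
  obtain ⟨c, hc, hf⟩ := hf
  obtain ⟨c', hc', hg⟩ := hg
  refine ⟨c + c', fun P => by rw [hlength, hc, hc', Pi.add_apply, Nat.cast_add], ?_⟩
  simp only [Pi.add_apply, Nat.cast_add, add_mul]
  rw [Summable.of_finite.tsum_add Summable.of_finite]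
  have hsum := (hu.add hf).add (hw.mul hg)
  rw [zero_add, one_mul] at hsum
  exact hsum.congr fun m => by ring

end LocalizationSum

section LocalizationFormula

variable {k R : Type*} [Field k] [CommRing R] [Algebra k R] {p : ℕ}
  {𝒜 : ℤ → Submodule k R} [GradedAlgebra 𝒜] {I : Ideal R}

local notation "ρ" => Submodule.restrictScalars k

variable {M : Type*} [AddCommGroup M] [Module R M] [Module k M] [IsScalarTower k R M]
  {ℳ : ℤ → Submodule k M} [DirectSum.Decomposition ℳ] [SetLike.GradedSMul 𝒜 ℳ]

lemma frobeniusHilbertSum_sup_span_singleton (y : ℂ) {N : Submodule R M} (hN : N.IsHomogeneous ℳ)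
    {z : M} {t : ℤ} (hz : z ∈ ℳ t) (m : ℕ) :
    frobeniusHilbertSum p I ℳ y (ρ N) (ρ (N ⊔ R ∙ z)) m =
      weight y (p ^ m) t * frobeniusHilbertSum p I 𝒜 y (ρ (N.colon {z})) ⊤ m := by
  rw [frobeniusHilbertSum, ← restrictScalars_bracketPow_smul, ← Submodule.restrictScalars_sup,
    weightedSum_sup_span_singleton 𝒜 y _ hN le_sup_left hz, colon_singleton_sup_ideal_smul,
    frobeniusHilbertSum, ← Submodule.restrictScalars_top k R R, ← restrictScalars_bracketPow_smul,
    smul_eq_mul, Ideal.mul_top, Submodule.restrictScalars_sup]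

variable [Algebra.FiniteType k R] [hp : Fact p.Prime] [CharP R p] (h : IsGradedDatum 𝒜 I) (y : ℂ)
  {d : ℕ} {𝔠 : Ideal R} {ℓ : topDimPrimes d 𝔠 → ℂ} (hdim : QuotDimLT (d + 1) 𝔠)
  (hℓ : ∀ P : topDimPrimes d 𝔠, Tendsto
    (fun m => frobeniusHilbertSum p I 𝒜 y (P.1.asIdeal.restrictScalars k) ⊤ m / (p : ℂ) ^ (m * d))
    atTop (nhds (ℓ P)))
include h hdim hℓ

lemma tendsToLocalizationSum_quotient {Q : PrimeSpectrum R} (h𝔠Q : 𝔠 ≤ Q.asIdeal)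
    (hQ : Q.asIdeal.IsHomogeneous 𝒜) :
    TendsToLocalizationSum (R ⧸ Q.asIdeal) ℓ fun m =>
      frobeniusHilbertSum p I 𝒜 y (ρ Q.asIdeal) ⊤ m / (p : ℂ) ^ (m * d) := by
  classical
  by_cases hlt : QuotDimLT d Q.asIdeal
  · refine tendsToLocalizationSum_zero (fun P => localLength_quotient_eq_zero fun hle => ?_) ?_
    · exact (hlt P.1 hle).ne (coheight_of_mem_topDimPrimes P.2)
    · simpa only [frobeniusSubalgebra_zero, Algebra.top_toSubmodule] using
        (isNegligible_frobeniusHilbertSum h y hQ hlt 0).tendsto_div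
  · let Q' : topDimPrimes d 𝔠 := ⟨Q, hdim.mem_topDimPrimes h𝔠Q hlt⟩
    refine ⟨Pi.single Q' 1, fun P => ?_, ?_⟩
    · obtain rfl | hne := eq_or_ne P Q'
      · simpa using localLength_quotient_self Q.asIdeal
      · rw [Pi.single_eq_of_ne hne, Nat.cast_zero]
        refine localLength_quotient_eq_zero fun hle => hne (Subtype.ext (PrimeSpectrum.ext ?_))
        exact (P.2.1.2 ⟨Q.2, h𝔠Q⟩ hle).antisymm hle
    · rw [tsum_eq_single Q' fun P hP => by rw [Pi.single_eq_of_ne hP, Nat.cast_zero, zero_mul]]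
      simpa using hℓ Q'

variable [Module.Finite R M] (h𝔠 : ∀ c ∈ 𝔠, ∀ x : M, c • x = 0)
include h𝔠

lemma tendsToLocalizationSum_sup_span_singleton {e : ℕ}
    (hr : (𝔠.comap (frobeniusSubalgebra k R p e).val).IsRadical) {N : Submodule R M}
    (hN : N.IsHomogeneous ℳ) {z : M} {t : ℤ} (hz : z ∈ ℳ t) (hprime : (N.colon {z}).IsPrime)
    (hsum : TendsToLocalizationSum N ℓ fun m =>
      frobeniusHilbertSum p I ℳ y (ρ (⊥ : Submodule R M)) (ρ N) m / (p : ℂ) ^ (m * d)) :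
    TendsToLocalizationSum ↥(N ⊔ R ∙ z) ℓ fun m =>
      frobeniusHilbertSum p I ℳ y (ρ (⊥ : Submodule R M)) (ρ (N ⊔ R ∙ z)) m /
        (p : ℂ) ^ (m * d) := by
  have : IsNoetherianRing R := Algebra.FiniteType.isNoetherianRing k R
  have h𝔠colon : 𝔠 ≤ N.colon {z} := fun c hc =>
    Submodule.mem_colon_singleton.2 (h𝔠 c hc z ▸ N.zero_mem)
  have hquotient := tendsToLocalizationSum_quotient h y hdim hℓ (Q := ⟨N.colon {z}, hprime⟩)
    h𝔠colon (isHomogeneous_colon_singleton hN hz)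
  have hspan : (N ⊔ R ∙ z).IsHomogeneous ℳ :=
    isHomogeneous_sup hN (isHomogeneous_span 𝒜 (by rintro _ rfl; exact ⟨t, hz⟩))
  have hadditive := (isNegligible_frobeniusHilbertSum_sub_sub h y hdim hr isHomogeneous_bot hN hspan
    bot_le le_sup_left fun c hc x _ => (h𝔠 c hc x).symm ▸ Submodule.zero_mem _).tendsto_div
  refine hsum.add hquotient (tendsto_weight_pow hp.out.one_lt y t)
    (fun P => localLength_sup_span_singleton _ N z) (hadditive.congr fun m => ?_)
  rw [frobeniusHilbertSum_sup_span_singleton (𝒜 := 𝒜) y hN hz]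
  ring

theorem tendsToLocalizationSum_frobeniusHilbertSum [Nontrivial (R ⧸ 𝔠)] :
    TendsToLocalizationSum M ℓ fun m =>
      frobeniusHilbertSum p I ℳ y ⊥ ⊤ m / (p : ℂ) ^ (m * d) := by
  have : IsNoetherianRing R := Algebra.FiniteType.isNoetherianRing k R
  have : IsNoetherian R M := isNoetherian_of_isNoetherianRing_of_finite R M
  have := charP_quotient k p 𝔠
  obtain ⟨e, he⟩ := exists_powLinearIndependent_frobeniusSubalgebra k p (R ⧸ 𝔠)
  refine TendsToLocalizationSum.of_localLength_eq ?_ fun P =>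
    localLength_congr P.1.asIdeal (Submodule.topEquiv (R := R) (M := M)).symm
  refine homogeneous_prime_filtration_induction 𝒜 (N₀ := ⊥) (X := ⊤)
    (isHomogeneous_bot (ℳ := ℳ)) isHomogeneous_top bot_le
    (fun N => TendsToLocalizationSum N ℓ fun m =>
      frobeniusHilbertSum p I ℳ y (ρ (⊥ : Submodule R M)) (ρ N) m / (p : ℂ) ^ (m * d)) ?_ ?_
  · refine tendsToLocalizationSum_zero (fun P => ?_) ?_
    · exact localLength_eq_zero (P.1.asIdeal.ne_top_iff_one.1 Ideal.IsPrime.ne_top') fun x =>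
        Subsingleton.elim _ _
    · simp [frobeniusHilbertSum, weightedSum, relLength_eq_zero_iff.2]
  · exact fun N z t hN _ _ hz hprime => tendsToLocalizationSum_sup_span_singleton h y hdim hℓ h𝔠
      (isRadical_comap_frobeniusSubalgebra he) hN hz hprime

end LocalizationFormula

section FnGen

variable {k : Type*} [Field k]

local notation "ρ" => Submodule.restrictScalars k

lemma quotPieceDim_eq_toNat_relLength {R M : Type*} [CommRing R] [Algebra k R] [AddCommGroup M]
    [Module R M] [Module k M] [IsScalarTower k R M] (ℳ : ℤ → Submodule k M) (N : Submodule R M)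
    (j : ℤ) : quotPieceDim k ℳ N j = (relLength (ρ N) (ℳ j)).toNat := by
  rw [quotPieceDim, Module.finrank, ← Cardinal.toNat_toENat, ← Module.length_eq_rank]
  rfl

lemma map_bracketPow_of_surjective {R S : Type*} [CommRing R] [CommRing S] {f : R →+* S}
    (hf : Function.Surjective f) (I : Ideal R) (q : ℕ) :
    (bracketPow I q).map f = bracketPow (I.map f) q := by
  rw [bracketPow, bracketPow, Ideal.map_span, Set.image_image]
  congr 1
  ext z
  constructor
  · rintro ⟨x, hx, rfl⟩
    exact ⟨f x, Ideal.mem_map_of_mem f hx, (map_pow f x q).symm⟩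
  · rintro ⟨w, hw, rfl⟩
    obtain ⟨x, hx, rfl⟩ := (Ideal.mem_map_iff_of_surjective f hf).1 hw
    exact ⟨x, hx, map_pow f x q⟩

variable {R M : Type*} [CommRing R] [Algebra k R] [AddCommGroup M] [Module R M] [Module k M]
  [IsScalarTower k R M]

lemma fnGen_map_eq {S M' : Type*} [CommRing S] [Algebra k S] [AddCommGroup M']
    [Module S M'] [Module k M'] [IsScalarTower k S M'] (J : Ideal S) (p d n : ℕ) (y : ℂ)
    (ℳ : ℤ → Submodule k M) (f : M →ₗ[k] M') {W : Submodule k M}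
    (hW : ∀ x, x ∈ W ↔ f x ∈ bracketPow J (p ^ n) • (⊤ : Submodule S M')) :
    FnGen k (fun j => (ℳ j).map f) J p d n y =
      weightedSum ℳ (weight y (p ^ n)) W ⊤ / (p : ℂ) ^ (n * d) := by
  rw [FnGen, one_div, inv_pow, ← pow_mul, div_eq_inv_mul, weightedSum]
  congr 1
  refine tsum_congr fun j => ?_
  rw [quotPieceDim_eq_toNat_relLength, relLength_map_eq f fun x _ => hW x, top_inf_eq, weight,
    Nat.cast_pow]

lemma fnGen_eq_frobeniusHilbertSum (ℳ : ℤ → Submodule k M) (I : Ideal R) (p d n : ℕ) (y : ℂ) :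
    FnGen k ℳ I p d n y = frobeniusHilbertSum p I ℳ y ⊥ ⊤ n / (p : ℂ) ^ (n * d) := by
  have h := fnGen_map_eq I p d n y ℳ LinearMap.id
    (W := ρ (bracketPow I (p ^ n) • (⊤ : Submodule R M))) fun _ => Iff.rfl
  simp only [Submodule.map_id, restrictScalars_bracketPow_smul] at h
  rw [h, frobeniusHilbertSum, bot_sup_eq, Submodule.restrictScalars_top]

lemma fnGen_quotient_eq_frobeniusHilbertSum (𝒜 : ℤ → Submodule k R) (I P : Ideal R) (p d n : ℕ)
    (y : ℂ) :
    FnGen k (fun j => (𝒜 j).map (Ideal.Quotient.mkₐ k P).toLinearMap)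
        (I.map (Ideal.Quotient.mk P)) p d n y =
      frobeniusHilbertSum p I 𝒜 y (ρ P) ⊤ n / (p : ℂ) ^ (n * d) := by
  rw [fnGen_map_eq (W := ρ (P ⊔ bracketPow I (p ^ n))), frobeniusHilbertSum,
    ← Submodule.restrictScalars_top k R R, ← restrictScalars_bracketPow_smul, smul_eq_mul,
    Ideal.mul_top, Submodule.restrictScalars_sup]
  intro x
  have hcomap := Ideal.comap_map_of_surjective (Ideal.Quotient.mk P) Ideal.Quotient.mk_surjective
    (bracketPow I (p ^ n))
  rw [← RingHom.ker_eq_comap_bot, Ideal.mk_ker, sup_comm,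
    map_bracketPow_of_surjective Ideal.Quotient.mk_surjective] at hcomap
  rw [smul_eq_mul, Ideal.mul_top, ← hcomap]
  rfl

end FnGen

end FrobeniusPoincare

open FrobeniusPoincare

/-- **Localization formula for Frobenius–Poincaré functions.**  If `M` has Krull dimension
`d` and `P₁, …, P_t` are the `d`-dimensional minimal primes in the support of `M`, then
`F(M,R,I,d)(y) = Σ_j λ_{R_{P_j}}(M_{P_j}) · F(R/P_j, R/P_j, I·R/P_j, d)(y)`. -/
theorem frobenius_poincare_localization
    (k R M : Type) [Field k] [CommRing R] [Algebra k R] [Algebra.FiniteType k R]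
    (p : ℕ) (hp : p.Prime) [CharP R p]
    (𝒜 : ℤ → Submodule k R) [GradedAlgebra 𝒜]
    (h𝒜neg : ∀ t : ℤ, t < 0 → 𝒜 t = ⊥)
    (h𝒜zero : ∀ x ∈ 𝒜 0, ∃ c : k, algebraMap k R c = x)
    (I : Ideal R) (hI : Ideal.IsHomogeneous 𝒜 I) (hIfl : IsFiniteLength R (R ⧸ I))
    [AddCommGroup M] [Module R M] [Module k M] [IsScalarTower k R M] [Module.Finite R M]
    (ℳ : ℤ → Submodule k M) [DirectSum.Decomposition ℳ]
    (hℳ : ∀ (a b : ℤ), ∀ r ∈ 𝒜 a, ∀ x ∈ ℳ b, r • x ∈ ℳ (a + b))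
    (dM : ℕ) (hdM : ringKrullDim (R ⧸ Module.annihilator R M) = dM)
    (y : ℂ) :
    ∃ (L : ℂ)
      (c : {P : PrimeSpectrum R //
              P.asIdeal ∈ (Module.annihilator R M).minimalPrimes ∧
              ringKrullDim (R ⧸ P.asIdeal) = dM} → ℕ)
      (ℓ : {P : PrimeSpectrum R //
              P.asIdeal ∈ (Module.annihilator R M).minimalPrimes ∧
              ringKrullDim (R ⧸ P.asIdeal) = dM} → ℂ),
      Tendsto (fun n : ℕ => FnGen k ℳ I p dM n y) atTop (nhds L) ∧
      (∀ P, moduleLength (Localization.AtPrime P.1.asIdeal)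
              (LocalizedModule P.1.asIdeal.primeCompl M) = ((c P : ℕ∞) : WithBot ℕ∞)) ∧
      (∀ P, Tendsto
        (fun n : ℕ => FnGen k
          (fun j : ℤ => ((𝒜 j).map (Ideal.Quotient.mkₐ k P.1.asIdeal).toLinearMap :
            Submodule k (R ⧸ P.1.asIdeal)))
          (I.map (Ideal.Quotient.mk P.1.asIdeal)) p dM n y) atTop (nhds (ℓ P))) ∧
      L = ∑' P, (c P : ℂ) * ℓ P := by
  have : Fact p.Prime := ⟨hp⟩
  have : IsNoetherianRing R := Algebra.FiniteType.isNoetherianRing k R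
  have : SetLike.GradedSMul 𝒜 ℳ := ⟨fun {a b r x} hr hx => hℳ a b r hr x hx⟩
  have : Nontrivial (R ⧸ Module.annihilator R M) := by
    by_contra hsub
    have := not_nontrivial_iff_subsingleton.1 hsub
    exact WithBot.bot_ne_coe (ringKrullDim_eq_bot_of_subsingleton.symm.trans hdM)
  have datum : IsGradedDatum 𝒜 I := ⟨h𝒜neg, h𝒜zero, hI, hIfl⟩
  have dim_lt {𝔠 : Ideal R} (h𝔠 : ringKrullDim (R ⧸ 𝔠) = dM) : QuotDimLT (dM + 1) 𝔠 :=
    .of_ringKrullDim_lt (h𝔠.trans_lt (mod_cast dM.lt_succ_self))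
  choose ℓ hℓ using fun P : topDimPrimes dM (Module.annihilator R M) =>
    exists_tendsto_frobeniusHilbertSum_div (p := p) datum y
      (isHomogeneous_of_mem_minimalPrimes (isHomogeneous_annihilator ℳ) P.2.1) (dim_lt P.2.2)
  obtain ⟨c, hc, hlim⟩ := tendsToLocalizationSum_frobeniusHilbertSum (ℳ := ℳ) datum y (dim_lt hdM)
    hℓ fun _ => Module.mem_annihilator.1
  refine ⟨_, c, ℓ, ?_, fun P => ?_, fun P => ?_, rfl⟩
  · exact hlim.congr fun n => (fnGen_eq_frobeniusHilbertSum ℳ I p dM n y).symm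
  · rw [moduleLength, ← Module.coe_length, ← hc P, localLength]
  · exact (hℓ P).congr fun n => (fnGen_quotient_eq_frobeniusHilbertSum 𝒜 I _ p dM n y).symm

end
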